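/- There is an absolute constant C, and for every ε > 0 there is δ > 0, such that the following holds. Let G be a finite group, π an irreducible unitary representation of G on a nonzero finite-dimensional complex inner product space, μ a symmetric probability measure on G, and l₁ > 0 an integer. Suppose that for every symmetric set A ⊆ G satisfying μ^{*(l)}(A) ≥ |G|^{−ε} for some integer l ≥ l₁, one has either |Π₃A| ≥ |G|^ε · |A| or |A| ≥ (dim π)^{−1/3}·|G|. Then the operator norm of π(μ) = Σ_{g∈G} μ(g)·π(g) satisfies ‖π(μ)‖ < (C · dim π)^{−δ/l₁}. -/

import Mathlib

open scoped BigOperators Matrix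

namespace Paper

abbrev V (p d : ℕ) : Type := Fin d → ZMod p
abbrev SL (p d : ℕ) : Type := Matrix.SpecialLinearGroup (Fin d) (ZMod p)

/-- The group `F_p^d ⋊ SL_d(F_p)` with multiplication
`(v₁,θ₁)·(v₂,θ₂) = (v₁+θ₁v₂, θ₁θ₂)`. -/
def Aff (p d : ℕ) : Type := V p d × SL p d

namespace Aff

variable {p d : ℕ}

/-- the translation part `v(g)` -/
def vec (g : Aff p d) : V p d := g.1

/-- the linear part `θ(g)` -/
def lin (g : Aff p d) : SL p d := g.2

def mk (v : V p d) (θ : SL p d) : Aff p d := (v, θ)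

instance : Mul (Aff p d) :=
  ⟨fun g h => (g.1 + (g.2 : Matrix (Fin d) (Fin d) (ZMod p)) *ᵥ h.1, g.2 * h.2)⟩

instance : One (Aff p d) := ⟨((0 : V p d), (1 : SL p d))⟩

instance : Inv (Aff p d) :=
  ⟨fun g => (-(((g.2)⁻¹ : SL p d) : Matrix (Fin d) (Fin d) (ZMod p)) *ᵥ g.1, (g.2)⁻¹)⟩

lemma mul_def (g h : Aff p d) :
    g * h = (g.1 + (g.2 : Matrix (Fin d) (Fin d) (ZMod p)) *ᵥ h.1, g.2 * h.2) := rfl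

instance : Group (Aff p d) where
  mul_assoc a b c := by
    refine Prod.ext ?_ ?_
    · show (a.1 + (a.2 : Matrix (Fin d) (Fin d) (ZMod p)) *ᵥ b.1) +
        ((a.2 * b.2 : SL p d) : Matrix (Fin d) (Fin d) (ZMod p)) *ᵥ c.1 =
        a.1 + (a.2 : Matrix (Fin d) (Fin d) (ZMod p)) *ᵥ
          (b.1 + (b.2 : Matrix (Fin d) (Fin d) (ZMod p)) *ᵥ c.1)
      simp [Matrix.mulVec_add, Matrix.mulVec_mulVec, add_assoc]
    · show a.2 * b.2 * c.2 = a.2 * (b.2 * c.2)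
      exact mul_assoc _ _ _
  one_mul a := by
    refine Prod.ext ?_ ?_
    · show (0 : V p d) + ((1 : SL p d) : Matrix (Fin d) (Fin d) (ZMod p)) *ᵥ a.1 = a.1
      simp
    · show (1 : SL p d) * a.2 = a.2
      exact one_mul _
  mul_one a := by
    refine Prod.ext ?_ ?_
    · show a.1 + (a.2 : Matrix (Fin d) (Fin d) (ZMod p)) *ᵥ (0 : V p d) = a.1
      simp
    · show a.2 * 1 = a.2
      exact mul_one _
  inv_mul_cancel a := by
    refine Prod.ext ?_ ?_
    · show -(((a.2)⁻¹ : SL p d) : Matrix (Fin d) (Fin d) (ZMod p)) *ᵥ a.1 +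
        (((a.2)⁻¹ : SL p d) : Matrix (Fin d) (Fin d) (ZMod p)) *ᵥ a.1 = (0 : V p d)
      rw [Matrix.neg_mulVec]
      exact neg_add_cancel _
    · show (a.2)⁻¹ * a.2 = 1
      exact inv_mul_cancel _

instance : DecidableEq (SL p d) :=
  inferInstanceAs (DecidableEq {A : Matrix (Fin d) (Fin d) (ZMod p) // A.det = 1})

instance : DecidableEq (Aff p d) := inferInstanceAs (DecidableEq (V p d × SL p d))

instance [NeZero p] : Fintype (Aff p d) := inferInstanceAs (Fintype (V p d × SL p d))

/-- the action of `Aff p d` on `F_p^d`: `g.x = v(g) + θ(g) x`. -/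
def aact (g : Aff p d) (x : V p d) : V p d :=
  g.vec + (g.lin : Matrix (Fin d) (Fin d) (ZMod p)) *ᵥ x

end Aff

/-- Dirac measure at a point -/
def dirac {β : Type*} [DecidableEq β] (x : β) : β → ℝ := fun y => if y = x then 1 else 0

/-- probability measure (density w.r.t. counting measure) on a finite set -/
def IsProb {β : Type*} [Fintype β] (μ : β → ℝ) : Prop :=
  (∀ x, 0 ≤ μ x) ∧ ∑ x, μ x = 1

/-- convolution of measures on a finite group -/
def conv {H : Type*} [Group H] [Fintype H] (μ ν : H → ℝ) : H → ℝ :=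
  fun g => ∑ h, μ h * ν (h⁻¹ * g)

/-- `l`-fold convolution `μ^{*(l)}` -/
def itconv {H : Type*} [Group H] [Fintype H] [DecidableEq H] (μ : H → ℝ) : ℕ → H → ℝ
  | 0 => dirac 1
  | n + 1 => conv (itconv μ n) μ

/-- `μ̌(g) = μ(g⁻¹)` -/
def check {H : Type*} [Group H] (μ : H → ℝ) : H → ℝ := fun g => μ g⁻¹

/-- the uniform probability measure on a finite subset -/
noncomputable def unif {H : Type*} [DecidableEq H] (S : Finset H) : H → ℝ :=
  fun g => if g ∈ S then ((S.card : ℝ))⁻¹ else 0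

/-- `L²` norm (counting measure) of a complex-valued function on a finite set -/
noncomputable def cnorm2 {β : Type*} [Fintype β] (f : β → ℂ) : ℝ :=
  Real.sqrt (∑ x, ‖f x‖ ^ 2)

/-- the averaging operator `L(μ)` on `ℂ[H]` -/
noncomputable def avgOp {H : Type*} [Group H] [Fintype H] (μ : H → ℝ) (f : H → ℂ) : H → ℂ :=
  fun g => ∑ s, (μ s : ℂ) * f (s⁻¹ * g)

/-- `‖L₀(μ)‖`: the operator norm, w.r.t. the `L²` norm for counting measure, of the
averaging operator `L(μ)` restricted to the functions with zero sum -/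
noncomputable def L0norm {H : Type*} [Group H] [Fintype H] (μ : H → ℝ) : ℝ :=
  sSup {r : ℝ | ∃ f : H → ℂ, (∑ g, f g) = 0 ∧ cnorm2 f ≤ 1 ∧ r = cnorm2 (avgOp μ f)}

/-- `L²` norm (counting measure) of a real-valued function on a finite set -/
noncomputable def norm2V {β : Type*} [Fintype β] (η : β → ℝ) : ℝ :=
  Real.sqrt (∑ x, (η x) ^ 2)

variable {p d : ℕ}

/-- the convolution `μ.ν` of a measure on `Aff p d` with a measure on `F_p^d`:
`(μ.ν)(x) = ∑_g μ(g)·ν(g⁻¹.x)` -/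
def actConv [NeZero p] (μ : Aff p d → ℝ) (ν : V p d → ℝ) : V p d → ℝ :=
  fun x => ∑ g : Aff p d, μ g * ν (Aff.aact g⁻¹ x)

/-- pushforward of a measure on `Aff p d` under the projection `θ` to the linear part -/
def push [NeZero p] (μ : Aff p d → ℝ) : SL p d → ℝ :=
  fun σ => ∑ g : Aff p d, if Aff.lin g = σ then μ g else 0

/-- `‖L₀^θ(μ)‖` -/
noncomputable def L0theta [NeZero p] (μ : Aff p d → ℝ) : ℝ := L0norm (push μ)

/-- the pairing `⟨x,ξ⟩` in `F_p` -/
def ip (x ξ : V p d) : ZMod p := ∑ i, x i * ξ i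

/-- `e(t) = e^{-2πit/p}` -/
noncomputable def ee (p : ℕ) (t : ZMod p) : ℂ :=
  Complex.exp (-(2 * Real.pi * Complex.I) * (t.val : ℂ) / (p : ℂ))

/-- the Fourier transform on `F_p^d` -/
noncomputable def fourier [NeZero p] (f : V p d → ℂ) (ξ : V p d) : ℂ :=
  ∑ x, ee p (ip x ξ) * f x

/-- the normalized `L̂⁴` norm on the Fourier side -/
noncomputable def hatNorm4 [NeZero p] (φ : V p d → ℂ) : ℝ :=
  (((p : ℝ) ^ d)⁻¹ * ∑ ξ, ‖φ ξ‖ ^ 4) ^ ((1 : ℝ) / 4)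

section Convolution

variable {H : Type*} [Group H] [Fintype H]

lemma conv_nonneg {μ ν : H → ℝ} (hμ : ∀ g, 0 ≤ μ g) (hν : ∀ g, 0 ≤ ν g) (g : H) :
    0 ≤ conv μ ν g :=
  Finset.sum_nonneg fun _ _ => mul_nonneg (hμ _) (hν _)

lemma sum_conv_smul {R M : Type*} [CommSemiring R] [Algebra ℝ R] [AddCommMonoid M] [Module R M]
    (μ ν : H → ℝ) (F : H → M) :
    ∑ g, algebraMap ℝ R (conv μ ν g) • F g =
      ∑ h, ∑ k, algebraMap ℝ R (μ h) • algebraMap ℝ R (ν k) • F (h * k) := by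
  simp only [conv, map_sum, map_mul, Finset.sum_smul, ← mul_smul]
  rw [Finset.sum_comm]
  refine Finset.sum_congr rfl fun h _ => ?_
  rw [← Equiv.sum_comp (Equiv.mulLeft h)]
  simp

lemma sum_conv (μ ν : H → ℝ) : ∑ g, conv μ ν g = (∑ g, μ g) * ∑ g, ν g := by
  have := sum_conv_smul (R := ℝ) μ ν (fun _ => (1 : ℝ))
  simpa [Finset.sum_mul_sum] using this

lemma IsProb.conv {μ ν : H → ℝ} (hμ : IsProb μ) (hν : IsProb ν) : IsProb (conv μ ν) :=
  ⟨conv_nonneg hμ.1 hν.1, by rw [sum_conv, hμ.2, hν.2, one_mul]⟩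

lemma conv_assoc (μ ν ρ : H → ℝ) : conv (conv μ ν) ρ = conv μ (conv ν ρ) := by
  funext g
  have := sum_conv_smul (R := ℝ) μ ν (fun h => ρ (h⁻¹ * g))
  simp only [Algebra.algebraMap_self, RingHom.id_apply, smul_eq_mul] at this
  rw [Paper.conv, this]
  simp only [Paper.conv, Finset.mul_sum]
  simp [mul_assoc]

lemma conv_le {μ ν : H → ℝ} (hμ : IsProb μ) {P : ℝ} (hν : ∀ g, ν g ≤ P) (g : H) :
    conv μ ν g ≤ P := by
  calc conv μ ν g ≤ ∑ h, μ h * P :=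
        Finset.sum_le_sum fun h _ => mul_le_mul_of_nonneg_left (hν _) (hμ.1 h)
    _ = P := by rw [← Finset.sum_mul, hμ.2, one_mul]

lemma conv_inv_of_symm {μ ν : H → ℝ} (hμ : ∀ g, μ g⁻¹ = μ g) (hν : ∀ g, ν g⁻¹ = ν g) (g : H) :
    conv μ ν g⁻¹ = conv ν μ g := by
  unfold conv
  rw [← Equiv.sum_comp ((Equiv.mulLeft g⁻¹))]
  refine Finset.sum_congr rfl fun h _ => ?_
  rw [← hμ, ← hν]
  simp [mul_comm]

lemma conv_one_of_symm {μ : H → ℝ} (hμ : ∀ g, μ g⁻¹ = μ g) :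
    conv μ μ 1 = ∑ g, μ g ^ 2 := by
  simp [conv, hμ, sq]

lemma conv_self_le_one {μ : H → ℝ} (hμ : ∀ g, μ g⁻¹ = μ g) (g : H) :
    conv μ μ g ≤ conv μ μ 1 := by
  rw [conv_one_of_symm hμ]
  have h1 : ∑ h, μ (h⁻¹ * g) ^ 2 = ∑ h, μ h ^ 2 := by
    rw [← Equiv.sum_comp ((Equiv.inv H).trans (Equiv.mulLeft g))]
    simp
  have h2 : conv μ μ g ≤ ∑ h, (μ h ^ 2 + μ (h⁻¹ * g) ^ 2) / 2 :=
    Finset.sum_le_sum fun h _ => by nlinarith [sq_nonneg (μ h - μ (h⁻¹ * g))]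
  rw [← Finset.sum_div, Finset.sum_add_distrib, h1] at h2
  linarith

lemma inv_card_le_conv_self_one {μ : H → ℝ} (h : IsProb μ) (hμ : ∀ g, μ g⁻¹ = μ g) :
    (Fintype.card H : ℝ)⁻¹ ≤ conv μ μ 1 := by
  rw [conv_one_of_symm hμ, inv_le_iff_one_le_mul₀' (by exact_mod_cast Fintype.card_pos)]
  have := sq_sum_le_card_mul_sum_sq (s := Finset.univ) (f := μ)
  rw [h.2] at this
  simpa using this

variable [DecidableEq H]

lemma conv_dirac_one (μ : H → ℝ) : conv μ (dirac 1) = μ := by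
  funext g
  simp [conv, dirac, inv_mul_eq_one]

lemma dirac_one_conv (μ : H → ℝ) : conv (dirac 1) μ = μ := by
  funext g
  simp [conv, dirac]

lemma itconv_add (μ : H → ℝ) (m n : ℕ) :
    itconv μ (m + n) = conv (itconv μ m) (itconv μ n) := by
  induction n with
  | zero => exact (conv_dirac_one _).symm
  | succ n ih => rw [← add_assoc, itconv, itconv, ih, conv_assoc]

lemma isProb_dirac {β : Type*} [Fintype β] [DecidableEq β] (x : β) : IsProb (dirac x) :=
  ⟨fun y => by unfold dirac; split_ifs <;> norm_num, by simp [dirac]⟩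

lemma IsProb.itconv {μ : H → ℝ} (h : IsProb μ) (n : ℕ) : IsProb (itconv μ n) := by
  induction n with
  | zero => exact isProb_dirac 1
  | succ n ih => exact ih.conv h

lemma itconv_inv {μ : H → ℝ} (h : ∀ g, μ g⁻¹ = μ g) (n : ℕ) (g : H) :
    itconv μ n g⁻¹ = itconv μ n g := by
  induction n generalizing g with
  | zero => simp [itconv, dirac]
  | succ n ih =>
    have h1 : itconv μ 1 = μ := dirac_one_conv μ
    have h2 := itconv_add μ 1 n
    rw [add_comm, h1] at h2
    rw [h2, conv_inv_of_symm h ih, ← itconv, h2]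

end Convolution

section ApproximateSubgroup

open scoped Pointwise

variable {H : Type*} [Group H] [Fintype H]

/-- The weight `∑ f(x) f(y)` of the representations `s = x y⁻¹`. -/
def autocorr (f : H → ℝ) (s : H) : ℝ := ∑ x, f x * f (s⁻¹ * x)

lemma autocorr_nonneg {f : H → ℝ} (hf : ∀ x, 0 ≤ f x) (s : H) : 0 ≤ autocorr f s :=
  Finset.sum_nonneg fun _ _ => mul_nonneg (hf _) (hf _)

lemma autocorr_inv (f : H → ℝ) (s : H) : autocorr f s⁻¹ = autocorr f s := by
  unfold autocorr
  rw [← Equiv.sum_comp (Equiv.mulLeft s⁻¹)]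
  simp [mul_comm]

lemma sum_autocorr (f : H → ℝ) : ∑ s, autocorr f s = (∑ x, f x) ^ 2 := by
  unfold autocorr
  rw [Finset.sum_comm, sq, Finset.sum_mul]
  refine Finset.sum_congr rfl fun x _ => ?_
  rw [← Finset.mul_sum, ← Equiv.sum_comp ((Equiv.inv H).trans (Equiv.mulRight x)) f]
  simp

lemma autocorr_le {f : H → ℝ} (hf : ∀ x, 0 ≤ f x) {B : ℝ} (hB : ∀ x, f x ≤ B) (s : H) :
    autocorr f s ≤ B * ∑ x, f x := by
  rw [Finset.mul_sum]
  exact Finset.sum_le_sum fun x _ => by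
    rw [mul_comm]; exact mul_le_mul_of_nonneg_right (hB _) (hf _)

lemma sum_autocorr_sq (f : H → ℝ) :
    ∑ s, autocorr f s ^ 2 = ∑ u, (∑ y, f y * f (y * u)) ^ 2 := by
  have h1 : ∑ s, autocorr f s ^ 2 =
      ∑ x, ∑ x', ∑ y, f x * f y * (f x' * f (y * x⁻¹ * x')) := by
    simp only [autocorr, sq, Finset.sum_mul_sum]
    rw [Finset.sum_comm]
    refine Finset.sum_congr rfl fun x _ => ?_
    rw [Finset.sum_comm]
    refine Finset.sum_congr rfl fun x' _ => ?_
    rw [← Equiv.sum_comp ((Equiv.inv H).trans (Equiv.mulLeft x))]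
    simp
  have h2 : ∑ u, (∑ y, f y * f (y * u)) ^ 2 =
      ∑ x, ∑ y, ∑ x', f x * f y * (f x' * f (y * x⁻¹ * x')) := by
    simp only [sq, Finset.sum_mul_sum]
    rw [Finset.sum_comm]
    refine Finset.sum_congr rfl fun x _ => ?_
    rw [Finset.sum_comm]
    refine Finset.sum_congr rfl fun y _ => ?_
    rw [← Equiv.sum_comp (Equiv.mulLeft x⁻¹)]
    refine Finset.sum_congr rfl fun x' _ => ?_
    simp only [Equiv.coe_mulLeft, mul_inv_cancel_left, mul_assoc]
    ring
  rw [h1, h2]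
  exact Finset.sum_congr rfl fun x _ => Finset.sum_comm

lemma chain_total (f : H → ℝ) (s₁ s₂ s₃ : H) :
    ∑ x, ∑ y, ∑ z, f x * f (s₁⁻¹ * x) * (f y * f (s₂⁻¹ * y)) * (f z * f (s₃⁻¹ * z)) =
      autocorr f s₁ * autocorr f s₂ * autocorr f s₃ := by
  simp only [autocorr, ← Finset.mul_sum, ← Finset.sum_mul]

variable [DecidableEq H]

/-- The mass of the pairs `(x, y)` with `x⁻¹y ∉ X` under the product weight `f ⊗ f`. -/
def offMass (f : H → ℝ) (X : Finset H) : ℝ :=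
  ∑ x, ∑ y, if x⁻¹ * y ∈ X then 0 else f x * f y

lemma sq_sub_offMass (f : H → ℝ) (X : Finset H) :
    (∑ x, f x) ^ 2 - offMass f X = ∑ u ∈ X, ∑ y, f y * f (y * u) := by
  rw [offMass, sq, Finset.sum_mul_sum, ← Finset.sum_sub_distrib, Finset.sum_comm (s := X)]
  refine Finset.sum_congr rfl fun x _ => ?_
  rw [← Finset.sum_sub_distrib, ← Equiv.sum_comp (Equiv.mulLeft x)]
  simp only [Equiv.coe_mulLeft, inv_mul_cancel_left]
  rw [← Finset.sum_subset (Finset.subset_univ X)]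
  · exact Finset.sum_congr rfl fun u hu => by simp [hu]
  · intro u _ hu; simp [hu]

/-- Lower bound for the energy of a weight most of whose pairs have quotient in `X`. -/
lemma pow_four_le_energy (f : H → ℝ) (X : Finset H)
    (h : offMass f X ≤ (∑ x, f x) ^ 2 / 2) :
    (∑ x, f x) ^ 4 / 4 ≤ X.card * ∑ s, autocorr f s ^ 2 := by
  have h1 := sq_sub_offMass f X
  have h2 := sq_sum_le_card_mul_sum_sq (s := X) (f := fun u => ∑ y, f y * f (y * u))
  have h3 : ∑ u ∈ X, (∑ y, f y * f (y * u)) ^ 2 ≤ ∑ s, autocorr f s ^ 2 := by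
    rw [sum_autocorr_sq]
    exact Finset.sum_le_sum_of_subset_of_nonneg (Finset.subset_univ _)
      fun _ _ _ => sq_nonneg _
  rw [← h1] at h2
  have h4 : (X.card : ℝ) * ∑ u ∈ X, (∑ y, f y * f (y * u)) ^ 2 ≤
      X.card * ∑ s, autocorr f s ^ 2 := mul_le_mul_of_nonneg_left h3 (by positivity)
  nlinarith [sq_nonneg (∑ x, f x)]

lemma exists_mul_mul_of_mem_pow_three {K : Type*} [Group K] [DecidableEq K] {S : Finset K} {g : K}
    (hg : g ∈ S ^ 3) :
    ∃ a ∈ S, ∃ b ∈ S, ∃ c ∈ S, a * b * c = g := by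
  rw [pow_succ, pow_two] at hg
  obtain ⟨x, hx, c, hc, rfl⟩ := Finset.mem_mul.1 hg
  obtain ⟨a, ha, b, hb, rfl⟩ := Finset.mem_mul.1 hx
  exact ⟨a, ha, b, hb, c, hc, rfl⟩

lemma chain_good_le {f : H → ℝ} (hf : ∀ x, 0 ≤ f x) {B : ℝ} (hB : ∀ x, f x ≤ B)
    (X : Finset H) (s₁ s₂ s₃ : H) :
    ∑ x, ∑ y, ∑ z, (if (s₁⁻¹ * x)⁻¹ * y ∈ X ∧ (s₂⁻¹ * y)⁻¹ * z ∈ X then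
      f x * f (s₁⁻¹ * x) * (f y * f (s₂⁻¹ * y)) * (f z * f (s₃⁻¹ * z)) else 0) ≤
    B ^ 4 * ∑ x, ∑ u ∈ X, ∑ v ∈ X, f x * f ((s₁ * s₂ * s₃)⁻¹ * (x * u * v)) := by
  have hB0 : 0 ≤ B := (hf 1).trans (hB 1)
  rw [Finset.mul_sum]
  refine Finset.sum_le_sum fun x _ => ?_
  rw [← Equiv.sum_comp (Equiv.mulLeft (s₁⁻¹ * x)), Finset.mul_sum,
    ← Finset.sum_subset (Finset.subset_univ X)]
  swap
  · intro u _ hu; simp [hu]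
  refine Finset.sum_le_sum fun u hu => ?_
  rw [← Equiv.sum_comp (Equiv.mulLeft (s₂⁻¹ * (s₁⁻¹ * x * u))), Finset.mul_sum,
    ← Finset.sum_subset (Finset.subset_univ X)]
  swap
  · intro v _ hv; simp [hv, mul_assoc]
  refine Finset.sum_le_sum fun v hv => ?_
  have e : s₃⁻¹ * (s₂⁻¹ * (s₁⁻¹ * x * u) * v) = (s₁ * s₂ * s₃)⁻¹ * (x * u * v) := by group
  simp only [Equiv.coe_mulLeft]
  simp only [inv_mul_cancel_left, hu, hv, and_self, if_true, e]
  generalize (s₁ * s₂ * s₃)⁻¹ * (x * u * v) = z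
  have hp : ∀ a b c d : H, f a * f b * (f c * f d) ≤ B ^ 4 := fun a b c d => by
    calc f a * f b * (f c * f d) ≤ B * B * (B * B) := by
          gcongr <;> first | exact hB _ | exact hf _ | exact mul_nonneg (hf _) (hf _)
      _ = B ^ 4 := by ring
  calc _ = (f (s₁⁻¹ * x) * f (s₁⁻¹ * x * u) *
        (f (s₂⁻¹ * (s₁⁻¹ * x * u)) * f (s₂⁻¹ * (s₁⁻¹ * x * u) * v))) * (f x * f z) := by ring
    _ ≤ _ := mul_le_mul_of_nonneg_right (hp _ _ _ _) (mul_nonneg (hf _) (hf _))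

lemma chain_bad_left_le {f : H → ℝ} (hf : ∀ x, 0 ≤ f x) {B : ℝ} (hB : ∀ x, f x ≤ B)
    (X : Finset H) (s₁ s₂ s₃ : H) :
    ∑ x, ∑ y, ∑ z, (if (s₁⁻¹ * x)⁻¹ * y ∈ X then 0 else
      f x * f (s₁⁻¹ * x) * (f y * f (s₂⁻¹ * y)) * (f z * f (s₃⁻¹ * z))) ≤
    B ^ 3 * (∑ x, f x) * offMass f X := by
  have hB0 : 0 ≤ B := (hf 1).trans (hB 1)
  rw [offMass, Finset.mul_sum, ← Equiv.sum_comp (Equiv.mulLeft s₁)]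
  refine Finset.sum_le_sum fun x _ => ?_
  rw [Finset.mul_sum]
  refine Finset.sum_le_sum fun y _ => ?_
  simp only [Equiv.coe_mulLeft, inv_mul_cancel_left]
  split_ifs
  · simp
  rw [← Finset.mul_sum]
  have h1 := autocorr_le hf hB s₃
  rw [autocorr] at h1
  calc f (s₁ * x) * f x * (f y * f (s₂⁻¹ * y)) * ∑ z, f z * f (s₃⁻¹ * z)
      ≤ B * f x * (f y * B) * (B * ∑ z, f z) := by
        have := hf x; have := hf y; have := hf (s₁ * x); have := hf (s₂⁻¹ * y)
        gcongr
        · exact Finset.sum_nonneg fun _ _ => mul_nonneg (hf _) (hf _)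
        · exact hB _
        · exact hB _
    _ = _ := by ring

lemma chain_bad_right_le {f : H → ℝ} (hf : ∀ x, 0 ≤ f x) {B : ℝ} (hB : ∀ x, f x ≤ B)
    (X : Finset H) (s₁ s₂ s₃ : H) :
    ∑ x, ∑ y, ∑ z, (if (s₂⁻¹ * y)⁻¹ * z ∈ X then 0 else
      f x * f (s₁⁻¹ * x) * (f y * f (s₂⁻¹ * y)) * (f z * f (s₃⁻¹ * z))) ≤
    B ^ 3 * (∑ x, f x) * offMass f X := by
  have hB0 : 0 ≤ B := (hf 1).trans (hB 1)
  rw [offMass, mul_assoc, Finset.sum_mul, Finset.mul_sum]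
  refine Finset.sum_le_sum fun x _ => ?_
  rw [← Equiv.sum_comp (Equiv.mulLeft s₂), Finset.mul_sum, Finset.mul_sum]
  refine Finset.sum_le_sum fun y _ => ?_
  rw [Finset.mul_sum, Finset.mul_sum]
  refine Finset.sum_le_sum fun z _ => ?_
  simp only [Equiv.coe_mulLeft, inv_mul_cancel_left]
  split_ifs
  · simp
  calc f x * f (s₁⁻¹ * x) * (f (s₂ * y) * f y) * (f z * f (s₃⁻¹ * z))
      ≤ f x * B * (B * f y) * (f z * B) := by
        have := hf x; have := hf y; have := hf z; have := hf (s₂ * y); have := hf (s₃⁻¹ * z)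
        have := hf (s₁⁻¹ * x)
        gcongr <;> exact hB _
    _ = _ := by ring

/-- If most pairs of a bounded weight `f` have quotient in a small set `X`, then the set of
elements with many representations `x y⁻¹` has small tripling. -/
lemma card_pow_three_mul_le {f : H → ℝ} (hf : ∀ x, 0 ≤ f x) {B θ : ℝ} (hB : ∀ x, f x ≤ B)
    (hθ : 0 ≤ θ) {X S : Finset H} (hS : ∀ s ∈ S, θ ≤ autocorr f s)
    (hX : 4 * (B ^ 3 * (∑ x, f x) * offMass f X) ≤ θ ^ 3) :
    ((S ^ 3).card : ℝ) * θ ^ 3 ≤ 2 * B ^ 4 * (∑ x, f x) ^ 2 * X.card ^ 2 := by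
  have key : ∀ g ∈ S ^ 3, θ ^ 3 / 2 ≤
      B ^ 4 * ∑ x, ∑ u ∈ X, ∑ v ∈ X, f x * f (g⁻¹ * (x * u * v)) := by
    intro g hg
    obtain ⟨a, ha, b, hb, c, hc, rfl⟩ := exists_mul_mul_of_mem_pow_three hg
    have h1 := chain_good_le hf hB X a b c
    have h2 := chain_bad_left_le hf hB X a b c
    have h3 := chain_bad_right_le hf hB X a b c
    have h4 := chain_total f a b c
    have h5 : θ ^ 3 ≤ autocorr f a * autocorr f b * autocorr f c := by
      have := hS a ha; have := hS b hb; have := hS c hc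
      calc θ ^ 3 = θ * θ * θ := by ring
        _ ≤ _ := by
          gcongr
          · exact mul_nonneg (autocorr_nonneg hf _) (autocorr_nonneg hf _)
          · exact autocorr_nonneg hf _
    rw [← h4] at h5
    have h6 : ∑ x, ∑ y, ∑ z, f x * f (a⁻¹ * x) * (f y * f (b⁻¹ * y)) * (f z * f (c⁻¹ * z)) ≤
      ∑ x, ∑ y, ∑ z, ((if (a⁻¹ * x)⁻¹ * y ∈ X ∧ (b⁻¹ * y)⁻¹ * z ∈ X then
        f x * f (a⁻¹ * x) * (f y * f (b⁻¹ * y)) * (f z * f (c⁻¹ * z)) else 0) +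
        (if (a⁻¹ * x)⁻¹ * y ∈ X then 0 else
          f x * f (a⁻¹ * x) * (f y * f (b⁻¹ * y)) * (f z * f (c⁻¹ * z))) +
        (if (b⁻¹ * y)⁻¹ * z ∈ X then 0 else
          f x * f (a⁻¹ * x) * (f y * f (b⁻¹ * y)) * (f z * f (c⁻¹ * z)))) := by
      refine Finset.sum_le_sum fun x _ => Finset.sum_le_sum fun y _ =>
        Finset.sum_le_sum fun z _ => ?_
      have h0 : 0 ≤ f x * f (a⁻¹ * x) * (f y * f (b⁻¹ * y)) * (f z * f (c⁻¹ * z)) := by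
        have := hf x; have := hf y; have := hf z; have := hf (a⁻¹ * x)
        have := hf (b⁻¹ * y); have := hf (c⁻¹ * z)
        positivity
      by_cases p1 : (a⁻¹ * x)⁻¹ * y ∈ X <;> by_cases p2 : (b⁻¹ * y)⁻¹ * z ∈ X <;>
        simp only [p1, p2, and_true, and_false, if_true, if_false] <;> linarith
    simp only [Finset.sum_add_distrib] at h6
    linarith
  have h1 : ((S ^ 3).card : ℝ) * (θ ^ 3 / 2) ≤
      ∑ g ∈ S ^ 3, B ^ 4 * ∑ x, ∑ u ∈ X, ∑ v ∈ X, f x * f (g⁻¹ * (x * u * v)) := by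
    rw [← nsmul_eq_mul]
    exact Finset.card_nsmul_le_sum _ _ _ key
  have h2 : ∑ g ∈ S ^ 3, B ^ 4 * ∑ x, ∑ u ∈ X, ∑ v ∈ X, f x * f (g⁻¹ * (x * u * v)) ≤
      ∑ g, B ^ 4 * ∑ x, ∑ u ∈ X, ∑ v ∈ X, f x * f (g⁻¹ * (x * u * v)) := by
    have hB0 : 0 ≤ B := (hf 1).trans (hB 1)
    refine Finset.sum_le_sum_of_subset_of_nonneg (Finset.subset_univ _) fun g _ _ =>
      mul_nonneg (by positivity) (Finset.sum_nonneg fun _ _ => Finset.sum_nonneg fun _ _ =>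
        Finset.sum_nonneg fun _ _ => mul_nonneg (hf _) (hf _))
  have h3 : ∑ g, B ^ 4 * ∑ x, ∑ u ∈ X, ∑ v ∈ X, f x * f (g⁻¹ * (x * u * v)) =
      B ^ 4 * ((∑ x, f x) ^ 2 * X.card ^ 2) := by
    rw [← Finset.mul_sum, Finset.sum_comm]
    congr 1
    have : ∀ x : H, ∑ g, ∑ u ∈ X, ∑ v ∈ X, f x * f (g⁻¹ * (x * u * v)) =
        f x * ((∑ x, f x) * X.card ^ 2) := by
      intro x
      rw [Finset.sum_comm]
      have : ∀ u ∈ X, ∑ g, ∑ v ∈ X, f x * f (g⁻¹ * (x * u * v)) =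
          X.card * (f x * ∑ x, f x) := by
        intro u _
        rw [Finset.sum_comm]
        have : ∀ v ∈ X, ∑ g, f x * f (g⁻¹ * (x * u * v)) = f x * ∑ x, f x := by
          intro v _
          rw [← Finset.mul_sum]
          congr 1
          rw [← Equiv.sum_comp ((Equiv.inv H).trans (Equiv.mulRight (x * u * v))) f]
          rfl
        rw [Finset.sum_congr rfl this, Finset.sum_const, nsmul_eq_mul]
      rw [Finset.sum_congr rfl this, Finset.sum_const, nsmul_eq_mul]
      ring
    rw [Finset.sum_congr rfl fun x _ => this x, ← Finset.sum_mul]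
    ring
  rw [h3] at h2
  linarith

/-- The (unnormalised) law of the midpoint of a two-step walk from `1` to `t`. -/
def bridge (w : H → ℝ) (t x : H) : ℝ := w x * w (x⁻¹ * t)

omit [DecidableEq H] in
lemma sum_bridge (w : H → ℝ) (t : H) : ∑ x, bridge w t x = conv w w t := rfl

omit [DecidableEq H] in
lemma autocorr_bridge_le {w : H → ℝ} (hw : ∀ x, 0 ≤ w x) (hs : ∀ x, w x⁻¹ = w x) {P : ℝ}
    (hP : ∀ x, w x ≤ P) (t s : H) : autocorr (bridge w t) s ≤ P ^ 2 * conv w w s := by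
  rw [autocorr, conv, Finset.mul_sum]
  refine Finset.sum_le_sum fun x _ => ?_
  have h1 : w (s⁻¹ * x) = w (x⁻¹ * s) := by rw [← hs]; simp
  have hP0 : 0 ≤ P := (hw 1).trans (hP 1)
  rw [bridge, bridge, h1]
  have h2 : w (x⁻¹ * t) * w ((s⁻¹ * x)⁻¹ * t) ≤ P * P :=
    mul_le_mul (hP _) (hP _) (hw _) hP0
  calc _ = w (x⁻¹ * t) * w ((s⁻¹ * x)⁻¹ * t) * (w x * w (x⁻¹ * s)) := by ring
    _ ≤ P * P * (w x * w (x⁻¹ * s)) :=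
        mul_le_mul_of_nonneg_right h2 (mul_nonneg (hw _) (hw _))
    _ = _ := by ring

lemma sum_offMass_bridge_le {w : H → ℝ} (hw : IsProb w) (hs : ∀ x, w x⁻¹ = w x)
    {X : Finset H} {η : ℝ} (hη : 0 ≤ η) (hX : ∀ u ∉ X, conv w w u ≤ η) :
    ∑ t, offMass (bridge w t) X ≤ η := by
  unfold offMass
  rw [Finset.sum_comm]
  have h1 : ∀ x, ∑ t, ∑ y, (if x⁻¹ * y ∈ X then 0 else bridge w t x * bridge w t y) ≤
      w x * η := by
    intro x
    rw [Finset.sum_comm]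
    have h2 : ∀ y, ∑ t, (if x⁻¹ * y ∈ X then 0 else bridge w t x * bridge w t y) ≤
        w x * η * w y := by
      intro y
      have hxy : 0 ≤ w x * w y := mul_nonneg (hw.1 x) (hw.1 y)
      split_ifs with h
      · simpa [mul_right_comm] using mul_nonneg hxy hη
      · calc ∑ t, bridge w t x * bridge w t y = w x * w y * conv w w (x⁻¹ * y) := by
              rw [conv, Finset.mul_sum, ← Equiv.sum_comp (Equiv.mulLeft x)]
              refine Finset.sum_congr rfl fun u _ => ?_
              have e : w (y⁻¹ * (x * u)) = w (u⁻¹ * (x⁻¹ * y)) := by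
                rw [← hs]; congr 1; group
              simp only [bridge, Equiv.coe_mulLeft, inv_mul_cancel_left, e]
              ring
          _ ≤ w x * w y * η := mul_le_mul_of_nonneg_left (hX _ h) hxy
          _ = _ := by ring
    calc _ ≤ ∑ y, w x * η * w y := Finset.sum_le_sum fun y _ => h2 y
      _ = _ := by rw [← Finset.mul_sum, hw.2, mul_one]
  calc _ ≤ ∑ x, w x * η := Finset.sum_le_sum fun x _ => h1 x
    _ = _ := by rw [← Finset.sum_mul, hw.2, one_mul]

lemma exists_bridge {w : H → ℝ} (hw : IsProb w) (hs : ∀ x, w x⁻¹ = w x) {P K τ : ℝ}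
    (hP0 : 0 < P) (hK : 0 < K) (hτ : 0 < τ) (hE : P / K ≤ ∑ t, conv w w t ^ 2)
    {X₀ X : Finset H} (hX₀ : ∀ u ∉ X₀, conv w w u ≤ P / (16 * K))
    (hX : ∀ u ∉ X, conv w w u ≤ τ * P) :
    ∃ t, P / (2 * K) ≤ conv w w t ∧ offMass (bridge w t) X₀ ≤ conv w w t ^ 2 / 2 ∧
      offMass (bridge w t) X ≤ 8 * K * τ * conv w w t ^ 2 := by
  have h0 := sum_offMass_bridge_le hw hs (by positivity) hX₀
  have h1 := sum_offMass_bridge_le hw hs (by positivity) hX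
  have hnn : ∀ (Y : Finset H) t, 0 ≤ offMass (bridge w t) Y := fun Y t =>
    Finset.sum_nonneg fun x _ => Finset.sum_nonneg fun y _ => by
      split_ifs
      · rfl
      · exact mul_nonneg (mul_nonneg (hw.1 _) (hw.1 _)) (mul_nonneg (hw.1 _) (hw.1 _))
  have hq := hw.conv hw
  have hlt : ∑ t, (P / (2 * K) * conv w w t + 2 * offMass (bridge w t) X₀ +
      (8 * K * τ)⁻¹ * offMass (bridge w t) X) < ∑ t, conv w w t ^ 2 := by
    simp only [Finset.sum_add_distrib, ← Finset.mul_sum]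
    rw [hq.2]
    have h2 : (8 * K * τ)⁻¹ * ∑ t, offMass (bridge w t) X ≤ (8 * K * τ)⁻¹ * (τ * P) :=
      mul_le_mul_of_nonneg_left h1 (by positivity)
    have e1 : (8 * K * τ)⁻¹ * (τ * P) = P / K / 8 := by field_simp
    have e2 : P / (16 * K) = P / K / 16 := by field_simp
    have e3 : P / (2 * K) = P / K / 2 := by field_simp
    have : 0 < P / K := by positivity
    linarith
  obtain ⟨t, -, ht⟩ := Finset.exists_lt_of_sum_lt hlt
  have hc : 0 < 8 * K * τ := by positivity
  have hn0 := hnn X₀ t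
  have hn1 := hnn X t
  have hn2 : 0 ≤ (8 * K * τ)⁻¹ * offMass (bridge w t) X := by positivity
  have hqt := hq.1 t
  refine ⟨t, ?_, ?_, ?_⟩
  · by_contra! h
    have := mul_le_mul_of_nonneg_right h.le hqt
    nlinarith
  · have : 0 ≤ P / (2 * K) * conv w w t := by positivity
    linarith
  · have : 0 ≤ P / (2 * K) * conv w w t := by positivity
    have h3 : (8 * K * τ)⁻¹ * offMass (bridge w t) X ≤ conv w w t ^ 2 := by linarith
    rwa [inv_mul_le_iff₀ hc] at h3

omit [Group H] [DecidableEq H] in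
lemma card_filter_lt_mul_le {q : H → ℝ} (hq : IsProb q) (η : ℝ) [DecidablePred fun x => η < q x] :
    ((Finset.univ.filter fun x => η < q x).card : ℝ) * η ≤ 1 := by
  rw [← hq.2, ← nsmul_eq_mul]
  refine (Finset.card_nsmul_le_sum _ q η fun x hx => (Finset.mem_filter.1 hx).2.le).trans ?_
  exact Finset.sum_le_sum_of_subset_of_nonneg (Finset.subset_univ _) fun x _ _ => hq.1 x

/-- A Balog–Szemerédi–Gowers type theorem for symmetric measures: if convolving `w` with itself
decreases the `L²` norm little, then `w * w` charges a symmetric set of small tripling. -/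
theorem exists_small_tripling {w : H → ℝ} (hw : IsProb w) (hs : ∀ x, w x⁻¹ = w x) {P K : ℝ}
    (hP0 : 0 < P) (hP : ∀ x, w x ≤ P) (hK : 0 < K) (hE : P / K ≤ ∑ t, conv w w t ^ 2) :
    ∃ S : Finset H, (∀ a ∈ S, a⁻¹ ∈ S) ∧ 1 ≤ 2 ^ 10 * K ^ 4 * ∑ s ∈ S, conv w w s ∧
      ((S ^ 3).card : ℝ) * P ≤ 2 ^ 84 * K ^ 21 ∧ (S.card : ℝ) * P ≤ 2 ^ 7 * K := by
  classical
  have hq := hw.conv hw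
  set τ : ℝ := (2 ^ 29 * K ^ 7)⁻¹ with hτ
  have hτ0 : 0 < τ := by positivity
  obtain ⟨t, hm, hoff₀, hoff⟩ := exists_bridge hw hs hP0 hK hτ0 hE
    (X₀ := Finset.univ.filter fun x => P / (16 * K) < conv w w x)
    (X := Finset.univ.filter fun x => τ * P < conv w w x) (by simp) (by simp)
  have hc₀ := card_filter_lt_mul_le hq (P / (16 * K))
  have hc := card_filter_lt_mul_le hq (τ * P)
  generalize (Finset.univ.filter fun x => P / (16 * K) < conv w w x) = X₀ at *
  generalize (Finset.univ.filter fun x => τ * P < conv w w x) = X at *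
  have hf : ∀ x, 0 ≤ bridge w t x := fun x => mul_nonneg (hw.1 _) (hw.1 _)
  have hB : ∀ x, bridge w t x ≤ P ^ 2 := fun x => by
    rw [sq]; exact mul_le_mul (hP _) (hP _) (hw.1 _) hP0.le
  have hr := autocorr_bridge_le hw.1 hs hP t
  have hrB := autocorr_le hf hB
  have hrs := sum_autocorr (bridge w t)
  have hen := pow_four_le_energy (bridge w t) X₀ (by rwa [sum_bridge])
  have htrip := fun (θ : ℝ) (S : Finset H) (h1 : 0 ≤ θ) (h2 : ∀ s ∈ S, θ ≤ autocorr _ s) =>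
    card_pow_three_mul_le hf hB h1 (X := X) h2
  rw [sum_bridge] at hrs hen
  simp only [sum_bridge] at hrB htrip
  set r := autocorr (bridge w t) with hrdef
  have hr0 : ∀ s, 0 ≤ r s := autocorr_nonneg hf
  have hmP : conv w w t ≤ P := conv_le hw hP t
  set m := conv w w t with hmdef
  have hm0 : 0 < m := lt_of_lt_of_le (by positivity) hm
  rw [div_le_iff₀ (by positivity)] at hm
  have hm' : P ≤ 2 * K * m := by linarith
  have hm3 : P ^ 3 ≤ (2 * K * m) ^ 3 := by gcongr
  have hm4 : P ^ 4 ≤ (2 * K * m) ^ 4 := by gcongr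
  set θ : ℝ := m ^ 2 * P / (2 ^ 7 * K) with hθ
  have hθ0 : 0 < θ := by positivity
  set S : Finset H := Finset.univ.filter fun s => θ ≤ r s with hS
  have hSr : ∀ s ∈ S, θ ≤ r s := fun s hs => (Finset.mem_filter.1 hs).2
  -- the energy carried by `S`
  have hE1 : m ^ 4 * P / (2 ^ 6 * K) ≤ ∑ s, r s ^ 2 := by
    have hX₀ : (X₀.card : ℝ) ≤ 16 * K / P := by
      rw [le_div_iff₀ hP0]
      rw [← mul_div_assoc, div_le_one (by positivity)] at hc₀
      exact hc₀
    have h1 : m ^ 4 / 4 ≤ 16 * K / P * ∑ s, r s ^ 2 := hen.trans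
      (mul_le_mul_of_nonneg_right hX₀ (Finset.sum_nonneg fun _ _ => sq_nonneg _))
    rw [div_mul_eq_mul_div, le_div_iff₀ hP0] at h1
    rw [div_le_iff₀ (by positivity)]
    linarith
  have hE2 : ∑ s, r s ^ 2 ≤ ∑ s ∈ S, r s ^ 2 + θ * m ^ 2 := by
    rw [← Finset.sum_filter_add_sum_filter_not Finset.univ (fun s => θ ≤ r s), ← hrs,
      Finset.mul_sum]
    gcongr
    refine (Finset.sum_le_sum fun s hs => ?_).trans (Finset.sum_le_sum_of_subset_of_nonneg
      (Finset.subset_univ (Finset.univ.filter fun s => ¬ θ ≤ r s))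
      fun s _ _ => mul_nonneg hθ0.le (hr0 s))
    have := (Finset.mem_filter.1 hs).2
    push Not at this
    rw [sq]
    exact mul_le_mul_of_nonneg_right this.le (hr0 s)
  have hE3 : ∑ s ∈ S, r s ^ 2 ≤ P ^ 4 * m * ∑ s ∈ S, conv w w s := by
    rw [Finset.mul_sum]
    refine Finset.sum_le_sum fun s _ => ?_
    calc r s ^ 2 = r s * r s := sq _
      _ ≤ (P ^ 2 * m) * (P ^ 2 * conv w w s) :=
          mul_le_mul (hrB s) (hr s) (hr0 s) (by positivity)
      _ = _ := by ring
  have e1 : m ^ 4 * P / (2 ^ 6 * K) = θ * m ^ 2 + m ^ 4 * P / (2 ^ 7 * K) := by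
    rw [hθ]; field_simp; norm_num
  refine ⟨S, ?_, ?_, ?_, ?_⟩
  · intro a ha
    rw [hS, Finset.mem_filter] at ha ⊢
    exact ⟨Finset.mem_univ _, by rw [hrdef, autocorr_inv]; exact ha.2⟩
  · have h1 : m ^ 4 * P / (2 ^ 7 * K) ≤ P ^ 4 * m * ∑ s ∈ S, conv w w s := by linarith
    rw [div_le_iff₀ (by positivity)] at h1
    have h2 : m ^ 3 ≤ P ^ 3 * (2 ^ 7 * K) * ∑ s ∈ S, conv w w s :=
      le_of_mul_le_mul_left (a := m * P) (by linarith) (by positivity)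
    refine le_of_mul_le_mul_left (a := P ^ 3) ?_ (by positivity)
    calc P ^ 3 * 1 ≤ 8 * K ^ 3 * m ^ 3 := by linarith
      _ ≤ 8 * K ^ 3 * (P ^ 3 * (2 ^ 7 * K) * ∑ s ∈ S, conv w w s) := by gcongr
      _ = _ := by ring
  · have hX : (X.card : ℝ) ≤ 2 ^ 29 * K ^ 7 / P := by
      rw [le_div_iff₀ hP0]
      rw [hτ, mul_left_comm, inv_mul_le_iff₀ (by positivity), mul_one] at hc
      exact hc
    have h1 := htrip θ S hθ0.le hSr ?_
    · have h2 : ((S ^ 3).card : ℝ) * θ ^ 3 ≤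
          2 * (P ^ 2) ^ 4 * m ^ 2 * (2 ^ 29 * K ^ 7 / P) ^ 2 := h1.trans (by gcongr)
      have h3 : ((S ^ 3).card : ℝ) * m ^ 4 ≤ 2 ^ 80 * K ^ 17 * P ^ 3 := by
        have e2 : ((S ^ 3).card : ℝ) * θ ^ 3 =
            ((S ^ 3).card : ℝ) * m ^ 4 * (m ^ 2 * P ^ 3 / (2 ^ 21 * K ^ 3)) := by
          rw [hθ]; field_simp
        have e3 : 2 * (P ^ 2) ^ 4 * m ^ 2 * (2 ^ 29 * K ^ 7 / P) ^ 2 =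
            2 ^ 80 * K ^ 17 * P ^ 3 * (m ^ 2 * P ^ 3 / (2 ^ 21 * K ^ 3)) := by
          field_simp
        rw [e2, e3] at h2
        exact le_of_mul_le_mul_right h2 (by positivity)
      refine le_of_mul_le_mul_right (a := P ^ 3) ?_ (by positivity)
      calc ((S ^ 3).card : ℝ) * P * P ^ 3 = (S ^ 3).card * P ^ 4 := by ring
        _ ≤ (S ^ 3).card * (2 * K * m) ^ 4 := by gcongr
        _ = 16 * K ^ 4 * ((S ^ 3).card * m ^ 4) := by ring
        _ ≤ 16 * K ^ 4 * (2 ^ 80 * K ^ 17 * P ^ 3) := by gcongr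
        _ = _ := by ring
    · calc 4 * ((P ^ 2) ^ 3 * m * offMass (bridge w t) X)
          ≤ 4 * ((P ^ 2) ^ 3 * m * (8 * K * τ * m ^ 2)) := by gcongr
        _ = P ^ 3 * (P ^ 3 * m ^ 3) / (2 ^ 24 * K ^ 6) := by rw [hτ]; field_simp; norm_num
        _ ≤ (2 * K * m) ^ 3 * (P ^ 3 * m ^ 3) / (2 ^ 24 * K ^ 6) := by gcongr
        _ = θ ^ 3 := by rw [hθ]; field_simp
  · have h1 : (S.card : ℝ) * θ ≤ m ^ 2 := by
      rw [← hrs, ← nsmul_eq_mul]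
      exact (Finset.card_nsmul_le_sum _ r θ hSr).trans
        (Finset.sum_le_sum_of_subset_of_nonneg (Finset.subset_univ _) fun s _ _ => hr0 s)
    rw [hθ, ← mul_div_assoc, div_le_iff₀ (by positivity)] at h1
    exact le_of_mul_le_mul_left (a := m ^ 2) (by linarith) (by positivity)

end ApproximateSubgroup

section UnitaryRepresentation

open scoped InnerProductSpace

variable {H : Type*} [Group H] [Fintype H] {W : Type*} [NormedAddCommGroup W]
  [InnerProductSpace ℂ W]

/-- The operator `π(f) = ∑ f(g) π(g)`. -/
def repOp (π : H →* (W →L[ℂ] W)) (f : H → ℝ) : W →L[ℂ] W := ∑ g, (f g : ℂ) • π g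

lemma repOp_conv (π : H →* (W →L[ℂ] W)) (μ ν : H → ℝ) :
    repOp π (conv μ ν) = repOp π μ * repOp π ν := by
  have h := sum_conv_smul (R := ℂ) μ ν (fun g => π g)
  simp only [Complex.coe_algebraMap] at h
  rw [repOp, h, repOp, repOp, Finset.sum_mul_sum]
  refine Finset.sum_congr rfl fun g _ => Finset.sum_congr rfl fun k _ => ?_
  rw [map_mul, smul_mul_smul_comm, ← mul_smul]

lemma repOp_itconv [DecidableEq H] (π : H →* (W →L[ℂ] W)) (μ : H → ℝ) (n : ℕ) :
    repOp π (itconv μ n) = repOp π μ ^ n := by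
  induction n with
  | zero => simp [repOp, itconv, dirac]
  | succ n ih => rw [itconv, repOp_conv, ih, pow_succ]

lemma inner_repOp (π : H →* (W →L[ℂ] W)) (f : H → ℝ) (v w : W) :
    ⟪w, repOp π f v⟫_ℂ = ∑ g, (f g : ℂ) * ⟪w, π g v⟫_ℂ := by
  simp [repOp]

variable {π : H →* (W →L[ℂ] W)}

lemma norm_repOp_le (hπ : ∀ (g : H) (v : W), ‖π g v‖ = ‖v‖) {f : H → ℝ} (hf : ∀ g, 0 ≤ f g) :
    ‖repOp π f‖ ≤ ∑ g, f g := by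
  refine (norm_sum_le _ _).trans (Finset.sum_le_sum fun g _ => ?_)
  rw [norm_smul, Complex.norm_real, Real.norm_of_nonneg (hf g)]
  exact mul_le_of_le_one_right (hf g)
    (ContinuousLinearMap.opNorm_le_bound _ zero_le_one fun v => by rw [hπ, one_mul])

omit [Fintype H] in
lemma inner_rep_rep (hπ : ∀ (g : H) (v : W), ‖π g v‖ = ‖v‖) (g : H) (v w : W) :
    ⟪π g v, π g w⟫_ℂ = ⟪v, w⟫_ℂ :=
  (LinearMap.norm_map_iff_inner_map_map (π g)).1 (hπ g) v w

omit [Fintype H] in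
lemma rep_rep_inv (g : H) (v : W) : π g (π g⁻¹ v) = v := by
  rw [← mul_apply_eq_comp, ← map_mul]; simp

omit [Fintype H] in
lemma inner_rep_left (hπ : ∀ (g : H) (v : W), ‖π g v‖ = ‖v‖) (g : H) (v w : W) :
    ⟪π g v, w⟫_ℂ = ⟪v, π g⁻¹ w⟫_ℂ := by
  rw [← inner_rep_rep hπ g v, rep_rep_inv]

lemma inner_repOp_left (hπ : ∀ (g : H) (v : W), ‖π g v‖ = ‖v‖) {f : H → ℝ}
    (hf : ∀ g, f g⁻¹ = f g) (v w : W) : ⟪repOp π f v, w⟫_ℂ = ⟪v, repOp π f w⟫_ℂ := by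
  rw [← inner_conj_symm, inner_repOp, inner_repOp, map_sum, ← Equiv.sum_comp (Equiv.inv H)]
  refine Finset.sum_congr rfl fun g _ => ?_
  simp [hf, inner_rep_left hπ]

variable [FiniteDimensional ℂ W]

lemma isSelfAdjoint_repOp (hπ : ∀ (g : H) (v : W), ‖π g v‖ = ‖v‖) {f : H → ℝ}
    (hf : ∀ g, f g⁻¹ = f g) :
    haveI := FiniteDimensional.complete ℂ W; IsSelfAdjoint (repOp π f) := by
  have := FiniteDimensional.complete ℂ W
  exact ContinuousLinearMap.isSelfAdjoint_iff_isSymmetric.2 fun v w => inner_repOp_left hπ hf v w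

lemma norm_repOp_pow_le (hπ : ∀ (g : H) (v : W), ‖π g v‖ = ‖v‖) {f : H → ℝ}
    (hf : ∀ g, f g⁻¹ = f g) {n : ℕ} (hn : n ≠ 0) : ‖repOp π f‖ ^ n ≤ ‖repOp π f ^ n‖ := by
  have := FiniteDimensional.complete ℂ W
  have h1 := (isSelfAdjoint_repOp hπ hf).norm_pow_two_pow n
  rcases (norm_nonneg (repOp π f)).eq_or_lt with h0 | h0
  · rw [← h0, zero_pow hn]; exact norm_nonneg _
  obtain ⟨k, hk0, hk⟩ : ∃ k, 0 < k ∧ 2 ^ n = n + k :=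
    ⟨2 ^ n - n, Nat.sub_pos_of_lt Nat.lt_two_pow_self,
      (Nat.add_sub_cancel' Nat.lt_two_pow_self.le).symm⟩
  rw [hk, pow_add, pow_add] at h1
  have h2 := norm_mul_le (repOp π f ^ n) (repOp π f ^ k)
  have h3 := norm_pow_le' (repOp π f) hk0
  refine le_of_mul_le_mul_right ?_ (pow_pos h0 k)
  rw [← h1]
  exact h2.trans (mul_le_mul_of_nonneg_left h3 (norm_nonneg _))

/-- Schur orthogonality for the matrix coefficients of an irreducible unitary representation. -/
lemma sum_sq_matrixCoeff [Nontrivial W] (hπ : ∀ (g : H) (v : W), ‖π g v‖ = ‖v‖)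
    (hirr : ∀ U : Submodule ℂ W, (∀ g : H, ∀ u ∈ U, π g u ∈ U) → U = ⊥ ∨ U = ⊤) (v w : W) :
    (Module.finrank ℂ W : ℝ) * ∑ g, ‖⟪π g w, v⟫_ℂ‖ ^ 2 =
      Fintype.card H * ‖w‖ ^ 2 * ‖v‖ ^ 2 := by
  let R : W →ₗ[ℂ] W := ∑ g, (InnerProductSpace.rankOne ℂ (π g w) (π g w) : W →L[ℂ] W).toLinearMap
  have hR : ∀ x, R x = ∑ g, ⟪π g w, x⟫_ℂ • π g w := fun x => by simp [R]
  have hinv : ∀ h x, R (π h x) = π h (R x) := by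
    intro h x
    rw [hR, hR, map_sum, ← Equiv.sum_comp (Equiv.mulLeft h)]
    refine Finset.sum_congr rfl fun g _ => ?_
    simp [map_mul, inner_rep_rep hπ]
  obtain ⟨c, hc⟩ := Module.End.exists_eigenvalue R
  have hT : Module.End.eigenspace R c = ⊤ := by
    refine (hirr _ fun g u hu => ?_).resolve_left hc
    rw [Module.End.mem_eigenspace_iff] at hu ⊢
    rw [hinv, hu, map_smul]
  have hRc : ∀ x, R x = c • x := fun x =>
    Module.End.mem_eigenspace_iff.1 (hT ▸ Submodule.mem_top)
  have hcoef : ∀ x, (∑ g, ‖⟪π g w, x⟫_ℂ‖ ^ 2 : ℝ) = c.re * ‖x‖ ^ 2 := by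
    intro x
    have h1 : ⟪x, R x⟫_ℂ = c * (‖x‖ ^ 2 : ℝ) := by
      rw [hRc, inner_smul_right, inner_self_eq_norm_sq_to_K]; simp
    have h2 : ⟪x, R x⟫_ℂ = ((∑ g, ‖⟪π g w, x⟫_ℂ‖ ^ 2 : ℝ) : ℂ) := by
      rw [hR, inner_sum]
      push_cast
      refine Finset.sum_congr rfl fun g _ => ?_
      rw [inner_smul_right, ← inner_conj_symm x, Complex.mul_conj']
    have := congrArg Complex.re (h2.symm.trans h1)
    rwa [Complex.ofReal_re, Complex.re_mul_ofReal] at this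
  have htr : (Fintype.card H : ℝ) * ‖w‖ ^ 2 = c.re * Module.finrank ℂ W := by
    have b := stdOrthonormalBasis ℂ W
    have h1 : ∑ i, ∑ g, ‖⟪π g w, b i⟫_ℂ‖ ^ 2 = Fintype.card H * ‖w‖ ^ 2 := by
      rw [Finset.sum_comm]
      simp [b.sum_sq_norm_inner_left, hπ]
    rw [← h1]
    simp [hcoef]
    ring
  rw [hcoef, htr]
  ring

lemma finrank_le_card [Nontrivial W] (hπ : ∀ (g : H) (v : W), ‖π g v‖ = ‖v‖)
    (hirr : ∀ U : Submodule ℂ W, (∀ g : H, ∀ u ∈ U, π g u ∈ U) → U = ⊥ ∨ U = ⊤) :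
    (Module.finrank ℂ W : ℝ) ≤ Fintype.card H := by
  obtain ⟨v, hv⟩ := exists_norm_eq W (zero_le_one (α := ℝ))
  have h := sum_sq_matrixCoeff hπ hirr v v
  have h1 : ‖⟪π 1 v, v⟫_ℂ‖ ^ 2 ≤ ∑ g, ‖⟪π g v, v⟫_ℂ‖ ^ 2 :=
    Finset.single_le_sum (f := fun g => ‖⟪π g v, v⟫_ℂ‖ ^ 2) (fun _ _ => by positivity)
      (Finset.mem_univ _)
  have h2 : ‖⟪π 1 v, v⟫_ℂ‖ = 1 := by
    rw [map_one, one_apply_eq_self, inner_self_eq_norm_sq_to_K, hv]; simp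
  rw [h2, one_pow] at h1
  rw [hv, one_pow, mul_one, mul_one] at h
  rw [← h]
  exact le_mul_of_one_le_right (Nat.cast_nonneg _) h1

lemma norm_repOp_sq_le [Nontrivial W] (hπ : ∀ (g : H) (v : W), ‖π g v‖ = ‖v‖)
    (hirr : ∀ U : Submodule ℂ W, (∀ g : H, ∀ u ∈ U, π g u ∈ U) → U = ⊥ ∨ U = ⊤) (f : H → ℝ) :
    ‖repOp π f‖ ^ 2 ≤ Fintype.card H / Module.finrank ℂ W * ∑ g, f g ^ 2 := by
  have hd : (0 : ℝ) < Module.finrank ℂ W := by exact_mod_cast Module.finrank_pos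
  have hsum : 0 ≤ ∑ g, f g ^ 2 := Finset.sum_nonneg fun _ _ => sq_nonneg _
  have hnn : 0 ≤ (Fintype.card H : ℝ) / Module.finrank ℂ W * ∑ g, f g ^ 2 := by positivity
  refine (Real.le_sqrt (norm_nonneg _) hnn).1 ?_
  refine ContinuousLinearMap.opNorm_le_bound _ (Real.sqrt_nonneg _) fun v => ?_
  set u := repOp π f v with hu
  rcases (norm_nonneg u).eq_or_lt with h0 | h0
  · rw [← h0]; positivity
  have h1 : ‖u‖ ^ 2 ≤ ∑ g, |f g| * ‖⟪π g v, u⟫_ℂ‖ := by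
    have e : ((‖u‖ : ℂ)) ^ 2 = ∑ g, (f g : ℂ) * ⟪u, π g v⟫_ℂ := by
      rw [← inner_repOp, ← hu, inner_self_eq_norm_sq_to_K]; simp
    have e2 := congrArg norm e
    rw [norm_pow, Complex.norm_real, norm_norm] at e2
    rw [e2]
    refine (norm_sum_le _ _).trans (Finset.sum_le_sum fun g _ => ?_)
    rw [norm_mul, Complex.norm_real, Real.norm_eq_abs, norm_inner_symm]
  have h2 := Finset.sum_mul_sq_le_sq_mul_sq Finset.univ (fun g => |f g|)
    (fun g => ‖⟪π g v, u⟫_ℂ‖)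
  have h3 := sum_sq_matrixCoeff hπ hirr u v
  have h4 : (‖u‖ ^ 2) ^ 2 ≤ (Fintype.card H / Module.finrank ℂ W * ∑ g, f g ^ 2) *
      ‖v‖ ^ 2 * ‖u‖ ^ 2 := by
    calc (‖u‖ ^ 2) ^ 2 ≤ (∑ g, |f g| * ‖⟪π g v, u⟫_ℂ‖) ^ 2 := by gcongr
      _ ≤ (∑ g, f g ^ 2) * ∑ g, ‖⟪π g v, u⟫_ℂ‖ ^ 2 := by simpa using h2
      _ = (∑ g, f g ^ 2) * (Fintype.card H * ‖v‖ ^ 2 * ‖u‖ ^ 2 / Module.finrank ℂ W) := by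
          rw [← h3]; field_simp
      _ = _ := by ring
  rw [← abs_of_nonneg (norm_nonneg u), ← Real.sqrt_sq (norm_nonneg v), ← Real.sqrt_mul hnn]
  refine Real.abs_le_sqrt ?_
  refine le_of_mul_le_mul_right (a := ‖u‖ ^ 2) ?_ (by positivity)
  rw [← sq]; exact h4

end UnitaryRepresentation

section Growth

open scoped Pointwise InnerProductSpace

variable {H : Type*} [Group H] [Fintype H] [DecidableEq H]

/-- Every symmetric set of `w`-mass at least `E⁻¹` either grows by a factor `E` under tripling or
has at least `M` elements. -/
def ExpandsOrLarge (w : H → ℝ) (E M : ℝ) : Prop :=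
  ∀ A : Finset H, (∀ a ∈ A, a⁻¹ ∈ A) → E⁻¹ ≤ ∑ g ∈ A, w g →
    E * (A.card : ℝ) ≤ ((A ^ 3).card : ℝ) ∨ M ≤ (A.card : ℝ)

lemma exists_le_mul_succ {a : ℕ → ℝ} {K : ℝ} {J : ℕ} (hK : 0 ≤ K) (h : a 0 < K ^ J * a J) :
    ∃ j < J, a j < K * a (j + 1) := by
  by_contra! hcon
  have key : ∀ j ≤ J, K ^ j * a j ≤ a 0 := by
    intro j
    induction j with
    | zero => simp
    | succ j ih =>
      intro hj
      calc K ^ (j + 1) * a (j + 1) = K ^ j * (K * a (j + 1)) := by ring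
        _ ≤ K ^ j * a j := mul_le_mul_of_nonneg_left (hcon j hj) (pow_nonneg hK j)
        _ ≤ a 0 := ih (by omega)
  exact (key J le_rfl).not_gt h

lemma itconv_two_mul (μ : H → ℝ) (n : ℕ) :
    itconv μ (2 * n) = conv (itconv μ n) (itconv μ n) := by
  rw [two_mul, itconv_add]

lemma exists_flat_scale {μ : H → ℝ} (hμ : IsProb μ) (hs : ∀ g, μ g⁻¹ = μ g) {K : ℝ} (hK : 0 < K)
    {J : ℕ} (hJ : (Fintype.card H : ℝ) < K ^ J) (l₁ : ℕ) :
    ∃ l, l₁ ≤ l ∧ l ≤ 4 ^ J * l₁ ∧ itconv μ (2 * l) 1 < K * itconv μ (2 * (4 * l)) 1 := by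
  have hN : (0 : ℝ) < Fintype.card H := by exact_mod_cast Fintype.card_pos
  have h0 : itconv μ (2 * (4 ^ 0 * l₁)) 1 < K ^ J * itconv μ (2 * (4 ^ J * l₁)) 1 := by
    have h1 : itconv μ (2 * (4 ^ 0 * l₁)) 1 ≤ 1 := by
      rw [← (hμ.itconv (2 * (4 ^ 0 * l₁))).2]
      exact Finset.single_le_sum (fun g _ => (hμ.itconv _).1 g) (Finset.mem_univ _)
    have h2 := inv_card_le_conv_self_one (hμ.itconv (4 ^ J * l₁)) (itconv_inv hs _)
    rw [← itconv_two_mul] at h2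
    refine h1.trans_lt ?_
    calc (1 : ℝ) < K ^ J * (Fintype.card H : ℝ)⁻¹ := by rwa [← div_eq_mul_inv, one_lt_div hN]
      _ ≤ _ := mul_le_mul_of_nonneg_left h2 (by positivity)
  obtain ⟨j, hj, h⟩ :=
    exists_le_mul_succ (a := fun j => itconv μ (2 * (4 ^ j * l₁)) 1) hK.le h0
  refine ⟨4 ^ j * l₁, Nat.le_mul_of_pos_left _ (by positivity),
    Nat.mul_le_mul_right _ (Nat.pow_le_pow_right (by norm_num) hj.le), ?_⟩
  rwa [pow_succ', mul_assoc] at h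

/-- If `w` is flat at the scale of its fourth convolution power, and sets of large `w * w`-mass
grow, then `w` is nearly bounded by a multiple of the uniform measure. -/
lemma conv_self_one_mul_card_le {w : H → ℝ} (hw : IsProb w) (hs : ∀ x, w x⁻¹ = w x)
    {P X M : ℝ} (hP0 : 0 < P) (hP : ∀ x, w x ≤ P) (hX : 2 ^ 10 ≤ X)
    (hflat : P ≤ X * conv (conv w w) (conv w w) 1)
    (hgrow : ExpandsOrLarge (conv w w) (X ^ 100) M) : M * P ≤ 2 ^ 7 * X := by
  have hX0 : 0 < X := lt_of_lt_of_le (by norm_num) hX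
  have hE : P / X ≤ ∑ t, conv w w t ^ 2 := by
    rw [← conv_one_of_symm (conv_inv_of_symm hs hs), div_le_iff₀ hX0, mul_comm]
    exact hflat
  obtain ⟨S, hSs, hmass, htrip, hcard⟩ := exists_small_tripling hw hs hP0 hP hX0 hE
  have hX6 : (2 : ℝ) ^ 10 * X ^ 4 ≤ X ^ 100 := by
    calc (2 : ℝ) ^ 10 * X ^ 4 ≤ X * X ^ 4 := by gcongr
      _ = X ^ 5 := by ring
      _ ≤ X ^ 100 := pow_le_pow_right₀ (by linarith) (by norm_num)
  have hsum : 0 ≤ ∑ s ∈ S, conv w w s := Finset.sum_nonneg fun s _ => (hw.conv hw).1 s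
  have hmass' : (X ^ 100)⁻¹ ≤ ∑ s ∈ S, conv w w s := by
    rw [inv_le_iff_one_le_mul₀' (by positivity)]
    exact hmass.trans (mul_le_mul_of_nonneg_right hX6 hsum)
  rcases hgrow S hSs hmass' with h | h
  · exfalso
    have h1 : ∑ s ∈ S, conv w w s ≤ S.card * P := by
      rw [← nsmul_eq_mul]
      exact Finset.sum_le_card_nsmul _ _ _ fun s _ => conv_le hw hP s
    have h2 : X ^ 100 * (S.card * P) ≤ 2 ^ 84 * X ^ 21 := by
      rw [← mul_assoc]
      exact (mul_le_mul_of_nonneg_right h hP0.le).trans htrip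
    have h3 : X ^ 100 ≤ 2 ^ 94 * X ^ 25 := by
      calc X ^ 100 = X ^ 100 * 1 := by ring
        _ ≤ X ^ 100 * (2 ^ 10 * X ^ 4 * (S.card * P)) := by
            gcongr
            exact hmass.trans (by gcongr)
        _ = 2 ^ 10 * X ^ 4 * (X ^ 100 * (S.card * P)) := by ring
        _ ≤ 2 ^ 10 * X ^ 4 * (2 ^ 84 * X ^ 21) := by gcongr
        _ = 2 ^ 94 * X ^ 25 := by ring
    have h4 : (2 : ℝ) ^ 100 ≤ X ^ 10 := by
      calc (2 : ℝ) ^ 100 = (2 ^ 10) ^ 10 := by norm_num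
        _ ≤ X ^ 10 := by gcongr
    have h5 : 2 ^ 94 * X ^ 25 < X ^ 100 := by
      calc 2 ^ 94 * X ^ 25 < 2 ^ 100 * X ^ 25 := by gcongr <;> norm_num
        _ ≤ X ^ 10 * X ^ 25 := by gcongr
        _ = X ^ 35 := by ring
        _ ≤ X ^ 100 := pow_le_pow_right₀ (by linarith) (by norm_num)
    exact h5.not_ge h3
  · exact (mul_le_mul_of_nonneg_right h hP0.le).trans hcard

variable {W : Type*} [NormedAddCommGroup W] [InnerProductSpace ℂ W] {π : H →* (W →L[ℂ] W)}

lemma norm_repOp_sq_le_of_flat [FiniteDimensional ℂ W] [Nontrivial W]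
    (hπ : ∀ (g : H) (v : W), ‖π g v‖ = ‖v‖)
    (hirr : ∀ U : Submodule ℂ W, (∀ g : H, ∀ u ∈ U, π g u ∈ U) → U = ⊥ ∨ U = ⊤)
    {w : H → ℝ} (hw : IsProb w) (hs : ∀ x, w x⁻¹ = w x) {P X Y : ℝ} (hP : ∀ x, w x ≤ P)
    (hX : 2 ^ 10 ≤ X) (hY : 4 ≤ Y) (hdim : (Module.finrank ℂ W : ℝ) = Y ^ 3)
    (hgrow : ExpandsOrLarge w (X ^ 100) (Fintype.card H / Y))
    (hPN : Fintype.card H / Y * P ≤ 2 ^ 7 * X) : ‖repOp π w‖ ^ 2 ≤ Y⁻¹ := by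
  have hN : (0 : ℝ) < Fintype.card H := by exact_mod_cast Fintype.card_pos
  have hX0 : 0 < X := lt_of_lt_of_le (by norm_num) hX
  have hY0 : 0 < Y := by linarith
  have hPN' : Fintype.card H * P ≤ X ^ 2 * Y := by
    calc Fintype.card H * P = Fintype.card H / Y * P * Y := by field_simp
      _ ≤ 2 ^ 7 * X * Y := by gcongr
      _ ≤ X * X * Y := by gcongr; linarith
      _ = X ^ 2 * Y := by ring
  have hbound : ∀ (f : H → ℝ) (t : ℝ), (∀ g, 0 ≤ f g) → (∀ g, f g ≤ w g) → (∀ g, f g ≤ t) →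
      ‖repOp π f‖ ^ 2 ≤ Fintype.card H * t / Y ^ 3 := by
    intro f t hf0 hfw hft
    have h1 : ∑ g, f g ^ 2 ≤ t := by
      calc ∑ g, f g ^ 2 ≤ ∑ g, w g * t := Finset.sum_le_sum fun g _ => by
            rw [sq]; exact mul_le_mul (hfw g) (hft g) (hf0 g) (hw.1 g)
        _ = t := by rw [← Finset.sum_mul, hw.2, one_mul]
    calc ‖repOp π f‖ ^ 2 ≤ Fintype.card H / Y ^ 3 * ∑ g, f g ^ 2 := by
          rw [← hdim]; exact norm_repOp_sq_le hπ hirr f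
      _ ≤ Fintype.card H / Y ^ 3 * t := by gcongr
      _ = _ := by ring
  rcases le_or_gt (X ^ 2) Y with hXY | hXY
  · calc ‖repOp π w‖ ^ 2 ≤ Fintype.card H * P / Y ^ 3 := hbound w P hw.1 (fun _ => le_rfl) hP
      _ ≤ Y * Y / Y ^ 3 :=
          div_le_div_of_nonneg_right (hPN'.trans (by gcongr)) (by positivity)
      _ = Y⁻¹ := by field_simp
  · set t : ℝ := Y / Fintype.card H with ht
    have ht0 : 0 < t := by positivity
    set U : Finset H := Finset.univ.filter fun g => t < w g with hU
    have hUX : X ^ 4 * Y ≤ X ^ 100 := by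
      calc X ^ 4 * Y ≤ X ^ 4 * X ^ 2 := by gcongr
        _ = X ^ 6 := by ring
        _ ≤ X ^ 100 := pow_le_pow_right₀ (by linarith) (by norm_num)
    have hmass : ∑ g ∈ U, w g ≤ Y⁻¹ := by
      rcases lt_or_ge (∑ g ∈ U, w g) (X ^ 100)⁻¹ with h | h
      · refine h.le.trans (inv_anti₀ hY0 (le_trans ?_ hUX))
        exact le_mul_of_one_le_left hY0.le (one_le_pow₀ (by linarith))
      have hUs : ∀ a ∈ U, a⁻¹ ∈ U := fun a ha => by
        simpa [hU, hs] using ha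
      rcases hgrow U hUs h with h1 | h1
      · have h2 : ((U ^ 3).card : ℝ) ≤ Fintype.card H := by exact_mod_cast Finset.card_le_univ _
        have h3 : ∑ g ∈ U, w g ≤ U.card * P := by
          rw [← nsmul_eq_mul]
          exact Finset.sum_le_card_nsmul _ _ _ fun s _ => hP s
        have hP0 : 0 ≤ P := (hw.1 1).trans (hP 1)
        have h4 : X ^ 100 * ∑ g ∈ U, w g ≤ X ^ 2 * Y := by
          calc X ^ 100 * ∑ g ∈ U, w g ≤ X ^ 100 * (U.card * P) := by gcongr
            _ = X ^ 100 * U.card * P := by ring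
            _ ≤ Fintype.card H * P := by gcongr; exact h1.trans h2
            _ ≤ _ := hPN'
        have h5 : 0 ≤ ∑ g ∈ U, w g := Finset.sum_nonneg fun s _ => hw.1 s
        rw [← one_div, le_div_iff₀ hY0]
        refine le_of_mul_le_mul_left ?_ (show 0 < X ^ 2 * Y by positivity)
        calc X ^ 2 * Y * ((∑ g ∈ U, w g) * Y) = X ^ 2 * Y * Y * ∑ g ∈ U, w g := by ring
          _ ≤ X ^ 2 * X ^ 2 * Y * ∑ g ∈ U, w g := by gcongr
          _ = X ^ 4 * Y * ∑ g ∈ U, w g := by ring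
          _ ≤ X ^ 100 * ∑ g ∈ U, w g := by gcongr
          _ ≤ X ^ 2 * Y * 1 := by rwa [mul_one]
      · exfalso
        have hne : U.Nonempty := by
          rw [← Finset.card_pos, ← Nat.cast_pos (α := ℝ)]
          exact lt_of_lt_of_le (by positivity) h1
        have h2 : ∑ _g ∈ U, t < ∑ g ∈ U, w g :=
          Finset.sum_lt_sum_of_nonempty hne fun g hg => (Finset.mem_filter.1 hg).2
        have h3 : ∑ g ∈ U, w g ≤ 1 := by
          rw [← hw.2]
          exact Finset.sum_le_sum_of_subset_of_nonneg (Finset.subset_univ _) fun g _ _ => hw.1 g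
        rw [Finset.sum_const, nsmul_eq_mul] at h2
        have h4 : (1 : ℝ) ≤ U.card * t := by
          calc (1 : ℝ) = Fintype.card H / Y * t := by rw [ht]; field_simp
            _ ≤ _ := by gcongr
        linarith
    have hsplit : repOp π w = repOp π (fun g => if g ∈ U then w g else 0) +
        repOp π (fun g => if g ∈ U then 0 else w g) := by
      simp only [repOp, ← Finset.sum_add_distrib, ← add_smul]
      refine Finset.sum_congr rfl fun g _ => ?_
      split_ifs <;> simp
    have h1 : ‖repOp π (fun g => if g ∈ U then w g else 0)‖ ≤ Y⁻¹ := by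
      refine (norm_repOp_le hπ fun g => ?_).trans ?_
      · split_ifs
        exacts [hw.1 g, le_rfl]
      · rwa [Finset.sum_ite_mem, Finset.univ_inter]
    have h2 : ‖repOp π (fun g => if g ∈ U then 0 else w g)‖ ≤ Y⁻¹ := by
      refine (sq_le_sq₀ (norm_nonneg _) (by positivity)).1 ?_
      refine (hbound _ t (fun g => ?_) (fun g => ?_) (fun g => ?_)).trans_eq ?_
      · split_ifs
        exacts [le_rfl, hw.1 g]
      · split_ifs
        exacts [hw.1 g, le_rfl]
      · split_ifs with h
        · exact ht0.le
        · simpa [hU] using h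
      · rw [ht]; field_simp
    have h3 : ‖repOp π w‖ ≤ 2 * Y⁻¹ := by
      rw [hsplit]
      exact (norm_add_le _ _).trans (by linarith)
    calc ‖repOp π w‖ ^ 2 ≤ (2 * Y⁻¹) ^ 2 := by gcongr
      _ = 4 * Y⁻¹ * Y⁻¹ := by ring
      _ ≤ 1 * Y⁻¹ := by
          gcongr
          rw [← div_eq_mul_inv]
          exact (div_le_one hY0).2 hY
      _ = Y⁻¹ := one_mul _

/-- If sets of large `w`-mass grow, then on average `w` displaces every unit vector. -/
lemma le_sum_mul_norm_sub_sq [FiniteDimensional ℂ W] [Nontrivial W]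
    (hπ : ∀ (g : H) (v : W), ‖π g v‖ = ‖v‖)
    (hirr : ∀ U : Submodule ℂ W, (∀ g : H, ∀ u ∈ U, π g u ∈ U) → U = ⊥ ∨ U = ⊤)
    {w : H → ℝ} (hw : IsProb w) {E Y c : ℝ} {J : ℕ} (hE : 0 < E)
    (hJ : (Fintype.card H : ℝ) < E ^ J) (hY : 4 ≤ Y)
    (hdim : (Module.finrank ℂ W : ℝ) = Y ^ 3)
    (hgrow : ExpandsOrLarge w E (Fintype.card H / Y)) (hc : c * 9 ^ J ≤ 1 - E⁻¹) {v : W}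
    (hv : ‖v‖ = 1) : c ≤ ∑ g, w g * ‖π g v - v‖ ^ 2 := by
  have hN : (0 : ℝ) < Fintype.card H := by exact_mod_cast Fintype.card_pos
  have hY0 : 0 < Y := by linarith
  by_contra! hlt
  let A : ℕ → Finset H := fun j => Finset.univ.filter fun g => ‖π g v - v‖ ≤ (3 ^ j : ℝ)⁻¹
  have hA : ∀ {j g}, g ∈ A j ↔ ‖π g v - v‖ ≤ (3 ^ j : ℝ)⁻¹ := by simp [A]
  have hone : ∀ j, (1 : ℝ) ≤ (A j).card := fun j => by
    rw [Nat.one_le_cast, Nat.one_le_iff_ne_zero, ← Nat.pos_iff_ne_zero, Finset.card_pos]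
    exact ⟨1, hA.2 (by simp)⟩
  have hsymm : ∀ j, ∀ a ∈ A j, a⁻¹ ∈ A j := fun j a ha => by
    rw [hA] at ha ⊢
    rw [← hπ a, map_sub, rep_rep_inv, norm_sub_rev]
    exact ha
  have hmul : ∀ a b : H, ‖π (a * b) v - v‖ ≤ ‖π a v - v‖ + ‖π b v - v‖ := fun a b => by
    have : π (a * b) v - v = π a (π b v - v) + (π a v - v) := by
      rw [map_mul, mul_apply_eq_comp, map_sub]; abel
    rw [this, add_comm ‖π a v - v‖]
    exact (norm_add_le _ _).trans_eq (by rw [hπ])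
  have hcube : ∀ j, A (j + 1) ^ 3 ⊆ A j := fun j x hx => by
    rw [pow_succ, sq] at hx
    obtain ⟨y, hy, c, hc, rfl⟩ := Finset.mem_mul.1 hx
    obtain ⟨a, ha, b, hb, rfl⟩ := Finset.mem_mul.1 hy
    rw [hA] at *
    have h3 : (3 ^ j : ℝ)⁻¹ = 3 * (3 ^ (j + 1) : ℝ)⁻¹ := by rw [pow_succ]; field_simp
    rw [h3]
    linarith [hmul (a * b) c, hmul a b]
  obtain ⟨j, hjJ, hj⟩ := exists_le_mul_succ (a := fun j => ((A j).card : ℝ)) hE.le (J := J) (by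
    calc ((A 0).card : ℝ) ≤ Fintype.card H := by exact_mod_cast Finset.card_le_univ _
      _ < E ^ J := hJ
      _ ≤ E ^ J * (A J).card := le_mul_of_one_le_right (by positivity) (hone J))
  have hmass : E⁻¹ ≤ ∑ g ∈ A (j + 1), w g := by
    have h1 : (∑ g ∈ (A (j + 1))ᶜ, w g) * ((3 ^ (j + 1) : ℝ)⁻¹) ^ 2 ≤ c := by
      rw [Finset.sum_mul]
      calc ∑ g ∈ (A (j + 1))ᶜ, w g * ((3 ^ (j + 1) : ℝ)⁻¹) ^ 2
          ≤ ∑ g ∈ (A (j + 1))ᶜ, w g * ‖π g v - v‖ ^ 2 := by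
            refine Finset.sum_le_sum fun g hg => mul_le_mul_of_nonneg_left ?_ (hw.1 g)
            rw [Finset.mem_compl, hA, not_le] at hg
            gcongr
        _ ≤ ∑ g, w g * ‖π g v - v‖ ^ 2 :=
            Finset.sum_le_sum_of_subset_of_nonneg (Finset.subset_univ _) fun g _ _ =>
              mul_nonneg (hw.1 g) (sq_nonneg _)
        _ ≤ c := hlt.le
    have h2 := Finset.sum_add_sum_compl (A (j + 1)) w
    rw [hw.2] at h2
    have hc0 : 0 ≤ c := le_trans (mul_nonneg (Finset.sum_nonneg fun g _ => hw.1 g)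
      (by positivity)) h1
    have h3 : ∑ g ∈ (A (j + 1))ᶜ, w g ≤ c * 9 ^ J := by
      have h4 : (((3 ^ (j + 1) : ℝ)⁻¹) ^ 2) * 9 ^ (j + 1) = 1 := by
        rw [inv_pow, ← pow_mul, mul_comm (j + 1), pow_mul]
        norm_num
      calc ∑ g ∈ (A (j + 1))ᶜ, w g
          = (∑ g ∈ (A (j + 1))ᶜ, w g) * (((3 ^ (j + 1) : ℝ)⁻¹) ^ 2 * 9 ^ (j + 1)) := by
            rw [h4, mul_one]
        _ ≤ c * 9 ^ (j + 1) := by rw [← mul_assoc]; gcongr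
        _ ≤ c * 9 ^ J := by
            gcongr
            · norm_num
            · exact hjJ
    linarith
  rcases hgrow _ (hsymm _) hmass with h | h
  · have : (((A (j + 1)) ^ 3).card : ℝ) ≤ (A j).card := by
      exact_mod_cast Finset.card_le_card (hcube j)
    linarith
  · have hcoef : ∀ g ∈ A (j + 1), (1 / 2 : ℝ) ^ 2 ≤ ‖⟪π g v, v⟫_ℂ‖ ^ 2 := fun g hg => by
      rw [hA] at hg
      have h3 : (3 ^ (j + 1) : ℝ)⁻¹ ≤ 1 / 2 := by
        rw [inv_le_comm₀ (by positivity) (by norm_num)]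
        calc ((1 / 2 : ℝ))⁻¹ ≤ 3 ^ 1 := by norm_num
          _ ≤ 3 ^ (j + 1) := pow_le_pow_right₀ (by norm_num) (by omega)
      have h4 : ‖⟪π g v - v, v⟫_ℂ‖ ≤ 1 / 2 :=
        (norm_inner_le_norm _ _).trans (by rw [hv, mul_one]; exact hg.trans h3)
      have h5 : ‖⟪v, v⟫_ℂ‖ = 1 := by rw [inner_self_eq_norm_sq_to_K, hv]; simp
      have h6 : ‖⟪v, v⟫_ℂ‖ ≤ ‖⟪π g v, v⟫_ℂ‖ + ‖⟪π g v - v, v⟫_ℂ‖ := by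
        have : ⟪v, v⟫_ℂ = ⟪π g v, v⟫_ℂ - ⟪π g v - v, v⟫_ℂ := by rw [inner_sub_left]; ring
        rw [this]
        exact norm_sub_le _ _
      gcongr
      linarith
    have h7 : (A (j + 1)).card * (1 / 2 : ℝ) ^ 2 ≤ ∑ g, ‖⟪π g v, v⟫_ℂ‖ ^ 2 := by
      rw [← nsmul_eq_mul]
      exact (Finset.card_nsmul_le_sum _ _ _ hcoef).trans
        (Finset.sum_le_sum_of_subset_of_nonneg (Finset.subset_univ _) fun g _ _ => sq_nonneg _)
    have h8 := sum_sq_matrixCoeff hπ hirr v v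
    rw [hdim, hv, one_pow, mul_one, mul_one] at h8
    have h9 : Y ^ 3 * (Fintype.card H / Y * (1 / 2) ^ 2) ≤ Fintype.card H := by
      refine le_of_le_of_eq ?_ h8
      gcongr
      exact le_trans (by gcongr) h7
    have h10 : Y ^ 3 * (Fintype.card H / Y * (1 / 2) ^ 2) = Fintype.card H * (Y ^ 2 / 4) := by
      field_simp; norm_num
    rw [h10] at h9
    have h11 : Y ^ 2 / 4 ≤ 1 := le_of_mul_le_mul_left (by rwa [mul_one]) hN
    nlinarith

end Growth

section SpectralGap

open scoped InnerProductSpace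

variable {H : Type*} [Group H] [Fintype H] [DecidableEq H] {W : Type*} [NormedAddCommGroup W]
  [InnerProductSpace ℂ W] [FiniteDimensional ℂ W] [Nontrivial W] {π : H →* (W →L[ℂ] W)}

lemma norm_repOp_pow_le_of_large_dim (hπ : ∀ (g : H) (v : W), ‖π g v‖ = ‖v‖)
    (hirr : ∀ U : Submodule ℂ W, (∀ g : H, ∀ u ∈ U, π g u ∈ U) → U = ⊥ ∨ U = ⊤)
    {μ : H → ℝ} (hμ : IsProb μ) (hs : ∀ x, μ x⁻¹ = μ x) {X Y : ℝ} {J l₁ : ℕ}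
    (hJ : (Fintype.card H : ℝ) < X ^ J) (hX : 2 ^ 10 ≤ X) (hY : 4 ≤ Y)
    (hdim : (Module.finrank ℂ W : ℝ) = Y ^ 3) (hl₁ : 0 < l₁)
    (hgrow : ∀ l, l₁ ≤ l → ExpandsOrLarge (itconv μ l) (X ^ 100) (Fintype.card H / Y)) :
    ‖repOp π μ‖ ^ (4 ^ (J + 1) * l₁) ≤ Y⁻¹ := by
  have hX0 : 0 < X := lt_of_lt_of_le (by norm_num) hX
  obtain ⟨l, hl, hlJ, hflat⟩ := exists_flat_scale hμ hs hX0 hJ l₁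
  have hw := hμ.itconv (2 * l)
  have hws := itconv_inv hs (2 * l)
  have hP : ∀ x, itconv μ (2 * l) x ≤ itconv μ (2 * l) 1 := by
    rw [itconv_two_mul]; exact conv_self_le_one (itconv_inv hs l)
  have hP0 : 0 < itconv μ (2 * l) 1 := by
    have h := inv_card_le_conv_self_one (hμ.itconv l) (itconv_inv hs l)
    rw [← itconv_two_mul] at h
    exact lt_of_lt_of_le (inv_pos.2 (by exact_mod_cast Fintype.card_pos)) h
  have hflat' : itconv μ (2 * l) 1 ≤ X * conv (conv (itconv μ (2 * l)) (itconv μ (2 * l)))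
      (conv (itconv μ (2 * l)) (itconv μ (2 * l))) 1 := by
    rw [← itconv_two_mul, ← itconv_two_mul, show 2 * (2 * (2 * l)) = 2 * (4 * l) by ring]
    exact hflat.le
  have hgrow' := hgrow (2 * (2 * l)) (by omega)
  rw [itconv_two_mul] at hgrow'
  have hPN := conv_self_one_mul_card_le hw hws hP0 hP hX hflat' hgrow'
  have h := norm_repOp_sq_le_of_flat hπ hirr hw hws hP hX hY hdim (hgrow _ (by omega)) hPN
  rw [repOp_itconv] at h
  have h1 : ‖repOp π μ‖ ≤ 1 := (norm_repOp_le hπ hμ.1).trans_eq hμ.2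
  calc ‖repOp π μ‖ ^ (4 ^ (J + 1) * l₁) ≤ ‖repOp π μ‖ ^ (4 * l) :=
        pow_le_pow_of_le_one (norm_nonneg _) h1 (by rw [pow_succ]; linarith)
    _ = (‖repOp π μ‖ ^ (2 * l)) ^ 2 := by ring
    _ ≤ ‖repOp π μ ^ (2 * l)‖ ^ 2 := by
        gcongr
        exact norm_repOp_pow_le hπ hs (by omega)
    _ ≤ Y⁻¹ := h

lemma norm_repOp_pow_le_of_displacement (hπ : ∀ (g : H) (v : W), ‖π g v‖ = ‖v‖)
    {μ : H → ℝ} (hμ : IsProb μ) (hs : ∀ x, μ x⁻¹ = μ x) {c : ℝ} {l : ℕ} (hl : 0 < l)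
    (hc : ∀ v : W, ‖v‖ = 1 → c ≤ ∑ g, itconv μ (2 * l) g * ‖π g v - v‖ ^ 2) :
    ‖repOp π μ‖ ^ (2 * l) ≤ 1 - c / 2 := by
  have hunit : ∀ v : W, ‖v‖ = 1 → ‖(repOp π μ ^ l) v‖ ^ 2 ≤ 1 - c / 2 := by
    intro v hv
    have h1 : ‖(repOp π μ ^ l) v‖ ^ 2 =
        ∑ g, itconv μ (2 * l) g * RCLike.re ⟪v, π g v⟫_ℂ := by
      rw [← inner_self_eq_norm_sq (𝕜 := ℂ), ← repOp_itconv,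
        inner_repOp_left hπ (itconv_inv hs l), ← mul_apply_eq_comp, ← repOp_conv,
        ← itconv_two_mul, inner_repOp, map_sum]
      simp
    have h2 : ∀ g, ‖π g v - v‖ ^ 2 = 2 - 2 * RCLike.re ⟪v, π g v⟫_ℂ := fun g => by
      rw [norm_sub_rev, norm_sub_sq (𝕜 := ℂ), hπ, hv]; ring
    have h3 := hc v hv
    simp only [h2, mul_sub, Finset.sum_sub_distrib, ← Finset.sum_mul, (hμ.itconv (2 * l)).2] at h3
    have h4 : ∑ g, itconv μ (2 * l) g * (2 * RCLike.re ⟪v, π g v⟫_ℂ) =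
        2 * ‖(repOp π μ ^ l) v‖ ^ 2 := by
      rw [h1, Finset.mul_sum]
      exact Finset.sum_congr rfl fun g _ => by ring
    rw [h4] at h3
    linarith
  obtain ⟨v₀, hv₀⟩ := exists_norm_eq W (zero_le_one (α := ℝ))
  have hnn : 0 ≤ 1 - c / 2 := (sq_nonneg _).trans (hunit v₀ hv₀)
  have hop : ‖repOp π μ ^ l‖ ≤ √(1 - c / 2) :=
    ContinuousLinearMap.opNorm_le_of_unit_norm (Real.sqrt_nonneg _) fun v hv =>
      Real.le_sqrt_of_sq_le (hunit v hv)
  calc ‖repOp π μ‖ ^ (2 * l) = (‖repOp π μ‖ ^ l) ^ 2 := by ring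
    _ ≤ ‖repOp π μ ^ l‖ ^ 2 := by
        gcongr
        exact norm_repOp_pow_le hπ hs hl.ne'
    _ ≤ √(1 - c / 2) ^ 2 := by gcongr
    _ = 1 - c / 2 := Real.sq_sqrt hnn

end SpectralGap

lemma lt_rpow_neg_div_of_pow_lt {x B s : ℝ} {n : ℕ} (hB : 0 < B) (hn : n ≠ 0)
    (h : x ^ n < B ^ (-s)) : x < B ^ (-(s / n)) := by
  refine lt_of_pow_lt_pow_left₀ n (by positivity) ?_
  rw [← Real.rpow_mul_natCast hB.le]
  have : -(s / n) * n = -s := by field_simp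
  rwa [this]

open Pointwise in
/-- (The Bourgain–Gamburd machine.) There is an absolute constant `C`, and
for every `ε > 0` a `δ > 0`, such that: if `G` is a finite group, `π` an irreducible unitary
representation of `G`, `μ` a symmetric probability measure on `G`, and `l₁ > 0` an integer
such that every symmetric `A ⊆ G` with `μ^{*(l)}(A) ≥ |G|^{−ε}` for some `l ≥ l₁` satisfies
`|Π₃A| ≥ |G|^ε·|A|` or `|A| ≥ (dim π)^{−1/3}·|G|`, then `‖π(μ)‖ < (C·dim π)^{−δ/l₁}`. -/
theorem statement13 :
    ∃ C : ℝ, 0 < C ∧ ∀ ε : ℝ, 0 < ε → ∃ δ : ℝ, 0 < δ ∧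
      ∀ (G : Type) [Group G] [Fintype G] [DecidableEq G],
      ∀ (W : Type) [NormedAddCommGroup W] [InnerProductSpace ℂ W]
        [FiniteDimensional ℂ W] [Nontrivial W],
      ∀ π : G →* (W →L[ℂ] W),
        (∀ (g : G) (v : W), ‖π g v‖ = ‖v‖) →
        (∀ U : Submodule ℂ W, (∀ g : G, ∀ u ∈ U, π g u ∈ U) → U = ⊥ ∨ U = ⊤) →
        ∀ μ : G → ℝ, IsProb μ → (∀ g : G, μ g⁻¹ = μ g) →
        ∀ l₁ : ℕ, 0 < l₁ →
        (∀ A : Finset G, (∀ a ∈ A, a⁻¹ ∈ A) →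
          (∃ l : ℕ, l₁ ≤ l ∧ (Fintype.card G : ℝ) ^ (-ε) ≤ ∑ g ∈ A, itconv μ l g) →
          ((Fintype.card G : ℝ) ^ ε * (A.card : ℝ) ≤ ((A ^ 3).card : ℝ) ∨
            (Module.finrank ℂ W : ℝ) ^ (-(1 / 3 : ℝ)) * (Fintype.card G : ℝ) ≤
              (A.card : ℝ))) →
        ‖∑ g : G, (μ g : ℂ) • π g‖ <
          (C * (Module.finrank ℂ W : ℝ)) ^ (-(δ / (l₁ : ℝ))) := by
  refine ⟨1 / 64, by norm_num, fun ε hε => ?_⟩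
  obtain ⟨J, hJ⟩ := exists_nat_gt (100 / ε)
  have hJε : 100 < ε * J := by rwa [div_lt_iff₀' hε] at hJ
  set D : ℝ := 2 ^ (1000 / ε) with hD
  have hD1 : 1 < D := Real.one_lt_rpow (by norm_num) (by positivity)
  have hlogD : 0 < Real.log D := Real.log_pos hD1
  set c : ℝ := (1 - 2 ^ (-ε)) / 9 ^ J with hc
  have hc0 : 0 < c :=
    div_pos (sub_pos.2 (Real.rpow_lt_one_of_one_lt_of_neg (by norm_num) (by linarith)))
      (by positivity)
  set δ : ℝ := min (c / (4 * Real.log D)) (1 / (3 * 4 ^ (J + 1))) with hδ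
  have hδ0 : 0 < δ := lt_min (by positivity) (by positivity)
  refine ⟨δ, hδ0, ?_⟩
  intro G _ _ _ W _ _ _ _ π hπ hirr μ hμ hs l₁ hl₁ hgrow
  change ‖repOp π μ‖ < _
  have hl₁' : (0 : ℝ) < l₁ := by exact_mod_cast hl₁
  have hd0 : (0 : ℝ) < Module.finrank ℂ W := by exact_mod_cast Module.finrank_pos
  have hdN := finrank_le_card hπ hirr
  set d : ℝ := (Module.finrank ℂ W : ℝ) with hd
  set N : ℝ := (Fintype.card G : ℝ) with hN
  have h1 : ‖repOp π μ‖ ≤ 1 := (norm_repOp_le hπ hμ.1).trans_eq hμ.2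
  rcases lt_or_ge d 64 with hd64 | hd64
  · exact h1.trans_lt (Real.one_lt_rpow_of_pos_of_lt_one_of_neg (by positivity) (by linarith)
      (neg_lt_zero.2 (by positivity)))
  have hN0 : 0 < N := by linarith
  have hN1 : 1 < N := by linarith
  set Y : ℝ := d ^ (1 / 3 : ℝ) with hY
  have hYd : d = Y ^ 3 := by
    rw [hY, ← Real.rpow_mul_natCast hd0.le]; norm_num
  have hY4 : 4 ≤ Y := by
    refine (pow_le_pow_iff_left₀ (by norm_num) (by positivity) (by norm_num : 3 ≠ 0)).1 ?_
    rw [← hYd]; linarith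
  have hgrow' : ∀ l, l₁ ≤ l → ExpandsOrLarge (itconv μ l) (N ^ ε) (N / Y) := by
    intro l hl A hA hm
    rw [← Real.rpow_neg hN0.le] at hm
    refine (hgrow A hA ⟨l, hl, hm⟩).imp_right fun h => le_of_eq_of_le ?_ h
    rw [Real.rpow_neg hd0.le, div_eq_inv_mul]
  rcases lt_or_ge d D with hdD | hdD
  · have hE : N < (N ^ ε) ^ J := by
      rw [← Real.rpow_mul_natCast hN0.le]
      exact Real.self_lt_rpow_of_one_lt hN1 (by linarith)
    have hcJ : c * 9 ^ J ≤ 1 - (N ^ ε)⁻¹ := by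
      rw [hc, div_mul_cancel₀ _ (by positivity), Real.rpow_neg (by norm_num)]
      gcongr
      linarith
    have h2 := norm_repOp_pow_le_of_displacement hπ hμ hs hl₁ fun v hv =>
      le_sum_mul_norm_sub_sq hπ hirr (hμ.itconv (2 * l₁)) (by positivity) hE hY4 hYd
        (hgrow' _ (by omega)) hcJ hv
    have h3 : 1 - c / 2 < (1 / 64 * d) ^ (-(2 * δ)) := by
      have h4 : δ * Real.log D ≤ c / 4 := by
        calc δ * Real.log D ≤ c / (4 * Real.log D) * Real.log D := by
              gcongr
              exact min_le_left _ _
          _ = c / 4 := by field_simp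
      calc 1 - c / 2 ≤ Real.log D * (-(2 * δ)) + 1 := by linarith
        _ < Real.exp (Real.log D * (-(2 * δ))) :=
            Real.add_one_lt_exp (mul_neg_of_pos_of_neg hlogD (by linarith)).ne
        _ = D ^ (-(2 * δ)) := (Real.rpow_def_of_pos (by linarith) _).symm
        _ ≤ (1 / 64 * d) ^ (-(2 * δ)) :=
            Real.rpow_le_rpow_of_nonpos (by positivity) (by linarith) (by linarith)
    have h5 := lt_rpow_neg_div_of_pow_lt (by positivity) (by omega) (h2.trans_lt h3)
    rwa [Nat.cast_mul, Nat.cast_ofNat, mul_div_mul_left _ _ two_ne_zero] at h5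
  · have hX : 2 ^ 10 ≤ N ^ (ε / 100) := by
      calc (2 : ℝ) ^ 10 = D ^ (ε / 100) := by
            rw [hD, ← Real.rpow_mul (by norm_num), ← Real.rpow_natCast]
            congr 1
            field_simp
            norm_num
        _ ≤ N ^ (ε / 100) := by gcongr; exact hdD.trans hdN
    have hXJ : N < (N ^ (ε / 100)) ^ J := by
      rw [← Real.rpow_mul_natCast hN0.le]
      exact Real.self_lt_rpow_of_one_lt hN1 (by linarith)
    have hXE : (N ^ (ε / 100)) ^ 100 = N ^ ε := by
      rw [← Real.rpow_mul_natCast hN0.le]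
      congr 1
      norm_num
    have h2 := norm_repOp_pow_le_of_large_dim hπ hirr hμ hs hXJ hX hY4 hYd hl₁
      (by rw [hXE]; exact hgrow')
    have h3 : ‖repOp π μ‖ ^ (3 * 4 ^ (J + 1) * l₁) < (1 / 64 * d) ^ (-(3 * 4 ^ (J + 1) * δ)) := by
      calc ‖repOp π μ‖ ^ (3 * 4 ^ (J + 1) * l₁) = (‖repOp π μ‖ ^ (4 ^ (J + 1) * l₁)) ^ 3 := by ring
        _ ≤ Y⁻¹ ^ 3 := by gcongr
        _ = d⁻¹ := by rw [inv_pow, ← hYd]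
        _ < (1 / 64 * d)⁻¹ := inv_strictAnti₀ (by positivity) (by linarith)
        _ = (1 / 64 * d) ^ (-1 : ℝ) := (Real.rpow_neg_one _).symm
        _ ≤ _ := by
          refine Real.rpow_le_rpow_of_exponent_le (by linarith) (neg_le_neg ?_)
          rw [← le_div_iff₀' (by positivity)]
          exact min_le_right _ _
    have h4 := lt_rpow_neg_div_of_pow_lt (by positivity) (by positivity) h3
    rw [Nat.cast_mul] at h4
    push_cast at h4
    rwa [mul_div_mul_left _ _ (by positivity)] at h4

end Paper
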